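/- In the correlated Erdős–Rényi detection problem with sparse parent graph, suppose there exists α > 0 with p_n ≤ n^{−α} for all sufficiently large n, and suppose there exists a sequence δ_n with n^{1/3}·δ_n → ∞ such that s_n² ≤ (1−δ_n)/(n·p_n) and s_n² ≤ 0.01 for all n. Then limsup_{n→∞} TV(P_{n,p_n,s_n}, Q_{n,p_n,s_n}) < 1; in particular strong detection is impossible. -/

import Mathlib

/-!
The proof is a truncated second moment argument. Let `q = p s²` be the edge density of the
intersection graph `A ∧ B^π` in the planted model, `π` being the hidden permutation.

*Truncation.* Restrict the planted model to the event that `A ∧ B^π` contains no bicycle, i.e. no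
path with both ends joined back to it (a connected graph with more edges than vertices). By a union
bound a bicycle appears with probability at most `∑ₘ n^(m+1) (m+1)² q^(m+2) ≤ 2 q / (1 - n q)³`
(`prob_bicycle_le`), and `n q ≤ 1 - δ` makes this at most `2 / (n^{1/3} δ)³ → 0`. So half of the
planted mass survives eventually (`half_le_trunc`).

*Second moment.* The second moment of the truncated likelihood ratio is an average over two
permutations `π, π'`. With `σ = π⁻¹ π'`, the product of the two likelihood ratios factors over the
orbits of `σ` on edges as a cyclic product of the kernel giving one bit of a correlated pair
conditionally on the other. This kernel copies its input with some probability and otherwise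
resamples it, so an orbit contributes at most `1` unless it lies in the intersection graph, where it
contributes `s^(2 · length)`. Hence the cross term is at most `∑ s^(2|H|)` over the bicycle-free,
`σ`-invariant graphs `H` (`sum_truncated_le`, `sum_cross_le`).

*Counting.* Averaging over `σ` counts each isomorphism class of bicycle-free graphs exactly once
(orbit–stabiliser, `sum_invariant_le`). A bicycle-free graph is a functional graph by Hall's theorem
(`exists_endpoint`); cutting its cycles and labelling the resulting forest breadth-first encodes the
class by a monotone self-map and a subset of `Fin N` (`exists_code`), where `N ≤ 2|H|` is the number
of non-isolated vertices. There are at most `8^N` codes, and `s ≤ 1/10`, so the second moment is at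
most `∑ (8/10)^N ≤ 5` (`second_moment_le`).

*Conclusion.* Cauchy–Schwarz turns mass `≥ 1/2` and second moment `≤ 5` into `TV ≤ 79/80`
(`abs_sub_le_of_second_moment`, `TV_le`).
-/

open MeasureTheory ProbabilityTheory Filter

noncomputable section

/-- The set of potential edges on `n` vertices: unordered pairs of distinct elements of `Fin n`. -/
abbrev Edge (n : ℕ) := {e : Sym2 (Fin n) // ¬ e.IsDiag}

instance (n : ℕ) : MeasurableSpace (Equiv.Perm (Fin n)) := ⊤

/-- The uniform distribution on permutations of `[n]`. -/
def permUniform (n : ℕ) : Measure (Equiv.Perm (Fin n)) :=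
  (PMF.uniformOfFintype (Equiv.Perm (Fin n))).toMeasure

/-- The action of a node permutation on edges, `π({i,j}) = {π(i), π(j)}`. -/
def edgeMap {n : ℕ} (π : Equiv.Perm (Fin n)) (e : Edge n) : Edge n :=
  ⟨Sym2.map π e.1, fun h => e.2 ((Sym2.isDiag_map π.injective).mp h)⟩

/-- The Bernoulli(p) distribution on `Bool` (a probability measure when `p ∈ [0,1]`). -/
def bern (p : ℝ) : Measure Bool :=
  ENNReal.ofReal p • Measure.dirac true + ENNReal.ofReal (1 - p) • Measure.dirac false

/-- i.i.d. Bernoulli(p) edge indicators. -/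
def bernEdges (n : ℕ) (p : ℝ) : Measure (Edge n → Bool) :=
  Measure.pi fun _ => bern p

/-- The null model `Q_{n,p,s}` of the correlated Erdős–Rényi problem: two independent families of
i.i.d. Bernoulli(ps) edge indicators. -/
def QER (n : ℕ) (p s : ℝ) : Measure ((Edge n → Bool) × (Edge n → Bool)) :=
  (bernEdges n (p * s)).prod (bernEdges n (p * s))

/-- The planted model `P_{n,p,s}`: draw `π` uniformly, a parent graph `G` with i.i.d. Bernoulli(p)
edges, and independent subsampling families `U`, `V` of i.i.d. Bernoulli(s); output
`A_e = G_e · U_e` and `B` with `B_{π(e)} = G_e · V_e`, i.e.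
`B_f = G_{π⁻¹(f)} · V_{π⁻¹(f)}`. -/
def PER (n : ℕ) (p s : ℝ) : Measure ((Edge n → Bool) × (Edge n → Bool)) :=
  Measure.map
    (fun ω : Equiv.Perm (Fin n) × (Edge n → Bool) × (Edge n → Bool) × (Edge n → Bool) =>
      (fun e => ω.2.1 e && ω.2.2.1 e,
       fun f => ω.2.1 (edgeMap ω.1⁻¹ f) && ω.2.2.2 (edgeMap ω.1⁻¹ f)))
    ((permUniform n).prod ((bernEdges n p).prod ((bernEdges n s).prod (bernEdges n s))))

/-- Total variation distance: `sup` over measurable sets `S` of `|P(S) - Q(S)|`. -/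
def TV {Ω : Type*} [MeasurableSpace Ω] (P Q : Measure Ω) : ℝ :=
  ⨆ S : {S : Set Ω // MeasurableSet S}, |(P S.1).toReal - (Q S.1).toReal|

section

open Finset

/-! ### Bicycles and Hall's theorem -/

/-- The edge set of a closed-up path: the path `x 0, …, x m` together with the chords
`x 0 — x a` and `x m — x b`. When all these `m + 2` edges are distinct it is an excess-one graph
(two cycles sharing vertices or joined by a path) on at most `m + 1` vertices. -/
def bicycle {V : Type*} [DecidableEq V] {m : ℕ} (x : Fin (m + 1) → V) (a b : Fin (m + 1)) :
    Finset (Sym2 V) :=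
  insert s(x 0, x a) (insert s(x (Fin.last m), x b)
    (Finset.univ.image fun i : Fin m => s(x i.castSucc, x i.succ)))

/-- A functional graph `y — f y` on `D`, with distinct edges, plus one further edge `u — w` inside
`D` contains a genuine bicycle: follow the orbit of `u` backwards from its first self-intersection,
cross `u — w`, and follow the orbit of `w` until it first meets something already visited. -/
lemma bicycle_of_map {V : Type*} [Fintype V] [DecidableEq V] (D : Finset V) (f : V → V)
    (hf : ∀ y ∈ D, f y ∈ D) (hinj : Set.InjOn (fun y => s(y, f y)) D) (u w : V)
    (hu : u ∈ D) (hw : w ∈ D) (hne : ∀ y ∈ D, s(y, f y) ≠ s(u, w)) :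
    ∃ (m : ℕ) (x : Fin (m + 1) → V) (a b : Fin (m + 1)),
      bicycle x a b ⊆ insert s(u, w) (D.image fun y => s(y, f y)) ∧
        m + 2 ≤ (bicycle x a b).card := by
  classical
  have hit : ∀ (v : V), v ∈ D → ∀ i, f^[i] v ∈ D := by
    intro v hv i
    induction i with
    | zero => simpa
    | succ i ih => rw [Function.iterate_succ_apply']; exact hf _ ih
  have hex : ∀ v : V, ∃ i j, i < j ∧ f^[i] v = f^[j] v := by
    intro v
    obtain ⟨i, j, hij, h⟩ := Finite.exists_ne_map_eq_of_infinite (fun i : ℕ => f^[i] v)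
    rcases lt_or_gt_of_ne hij with h' | h'
    · exact ⟨i, j, h', h⟩
    · exact ⟨j, i, h', h.symm⟩
  have hk : ∃ k, ∃ i ≤ k, f^[k + 1] u = f^[i] u := by
    obtain ⟨i, j, hij, h⟩ := hex u
    exact ⟨j - 1, i, by omega, by rw [show j - 1 + 1 = j by omega, h]⟩
  obtain ⟨i₀, hi₀, hclose⟩ := Nat.find_spec hk
  have hkmin := fun i => Nat.find_min (m := i) hk
  set k := Nat.find hk with hkdef
  clear_value k
  have hj : ∃ j, (∃ i ≤ k, f^[j] w = f^[i] u) ∨ ∃ i < j, f^[j] w = f^[i] w := by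
    obtain ⟨i, j, hij, h⟩ := hex w
    exact ⟨j, Or.inr ⟨i, hij, h.symm⟩⟩
  have hjs := Nat.find_spec hj
  have hjmin := fun i => Nat.find_min (m := i) hj
  set j := Nat.find hj with hjdef
  clear_value j
  -- the path runs backwards along the orbit of `u`, then forwards along the orbit of `w`
  set X : ℕ → V := fun i => if i ≤ k then f^[k - i] u else f^[i - (k + 1)] w with hX
  have hXlt : ∀ i i', i < i' → i' ≤ k + j → X i ≠ X i' := by
    intro i i' hlt hle heq
    simp only [hX] at heq
    by_cases h1 : i' ≤ k
    · rw [if_pos h1, if_pos (by omega)] at heq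
      exact hkmin (k - i - 1) (by omega)
        ⟨k - i', by omega, by rw [show k - i - 1 + 1 = k - i by omega]; exact heq⟩
    · rw [if_neg h1] at heq
      by_cases h2 : i ≤ k
      · rw [if_pos h2] at heq
        exact hjmin (i' - (k + 1)) (by omega) (Or.inl ⟨k - i, by omega, heq.symm⟩)
      · rw [if_neg h2] at heq
        exact hjmin (i' - (k + 1)) (by omega)
          (Or.inr ⟨i - (k + 1), by omega, heq.symm⟩)
  have hXinj : Set.InjOn X (Finset.range (k + j + 1)) := by
    intro i hi i' hi' heq
    simp only [coe_range, Set.mem_Iio] at hi hi'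
    by_contra hne'
    rcases lt_or_gt_of_ne hne' with h | h
    · exact hXlt _ _ h (by omega) heq
    · exact hXlt _ _ h (by omega) heq.symm
  have hXD : ∀ i, X i ∈ D := by
    intro i
    simp only [hX]
    split_ifs
    · exact hit u hu _
    · exact hit w hw _
  have hXk : X k = u := by simp [hX]
  have hXw : ∀ i, X (k + 1 + i) = f^[i] w := by
    intro i
    simp only [hX]
    rw [if_neg (by omega)]
    congr 2
    omega
  have hXu : ∀ i ≤ k, X (k - i) = f^[i] u := by
    intro i hi
    simp only [hX]
    rw [if_pos (by omega)]
    congr 2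
    omega
  have hstep1 : ∀ i < k, f (X (i + 1)) = X i := by
    intro i hi
    have h1 := hXu (k - i) (by omega)
    have h2 := hXu (k - (i + 1)) (by omega)
    rw [show k - (k - i) = i by omega] at h1
    rw [show k - (k - (i + 1)) = i + 1 by omega] at h2
    rw [h1, h2, ← Function.iterate_succ_apply' f, show (k - (i + 1)).succ = k - i by omega]
  have hstep2 : ∀ i, k < i → f (X i) = X (i + 1) := by
    intro i hi
    have h1 := hXw (i - (k + 1))
    have h2 := hXw (i + 1 - (k + 1))
    rw [show k + 1 + (i - (k + 1)) = i by omega] at h1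
    rw [show k + 1 + (i + 1 - (k + 1)) = i + 1 by omega] at h2
    rw [h1, h2, ← Function.iterate_succ_apply' f]
    congr 2
    omega
  have hX0 : f (X 0) = X (k - i₀) := by
    rw [hXu i₀ hi₀, ← hclose, Function.iterate_succ_apply']
    congr 1
  -- closing index at the far end of the path
  obtain ⟨b, hbm, hb⟩ : ∃ b ≤ k + j, X (k + j + 1) = X b := by
    rw [show k + j + 1 = k + 1 + j by omega, hXw]
    rcases hjs with ⟨i, hi, h⟩ | ⟨i, hi, h⟩
    · exact ⟨k - i, by omega, by rw [h, hXu i hi]⟩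
    · exact ⟨k + 1 + i, by omega, by rw [h, hXw]⟩
  have hXw0 : X (k + 1) = w := by simpa using hXw 0
  have hsteps : ∀ i < k + j, s(X i, X (i + 1)) ∈
      insert s(u, w) (D.image fun y => s(y, f y)) := by
    intro i hi
    rcases lt_trichotomy i k with h | h | h
    · refine mem_insert_of_mem (mem_image.2 ⟨X (i + 1), hXD _, ?_⟩)
      simp only [hstep1 i h]
      exact Sym2.eq_swap
    · subst h
      rw [hXk, hXw0]
      exact mem_insert_self _ _
    · refine mem_insert_of_mem (mem_image.2 ⟨X i, hXD _, ?_⟩)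
      simp only [hstep2 i h]
  have hlast : s(X (k + j), X (k + j + 1)) ∈
      insert s(u, w) (D.image fun y => s(y, f y)) := by
    rcases Nat.eq_zero_or_pos j with h | h
    · subst h
      simp only [add_zero]
      rw [hXk, hXw0]
      exact mem_insert_self _ _
    · refine mem_insert_of_mem (mem_image.2 ⟨X (k + j), hXD _, ?_⟩)
      simp only [hstep2 (k + j) (by omega)]
  refine ⟨k + j, fun i => X i, ⟨k - i₀, by omega⟩, ⟨b, by omega⟩, ?_, ?_⟩
  · intro e he
    simp only [bicycle, mem_insert, mem_image, mem_univ, true_and] at he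
    rcases he with h | h | ⟨i, h⟩
    · rw [h]
      refine mem_insert_of_mem (mem_image.2 ⟨X 0, hXD _, ?_⟩)
      simp [hX0]
    · rw [h]
      simpa [← hb] using hlast
    · rw [← h]
      simpa using hsteps i i.2
  · have hsub : insert s(u, w) ((range (k + j + 1)).image fun i => s(X i, f (X i))) ⊆
        bicycle (m := k + j) (fun i => X i) ⟨k - i₀, by omega⟩ ⟨b, by omega⟩ := by
      have hmem : ∀ i < k + j, s(X i, X (i + 1)) ∈
          bicycle (m := k + j) (fun i => X i) ⟨k - i₀, by omega⟩ ⟨b, by omega⟩ := by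
        intro i hi
        simp only [bicycle, mem_insert, mem_image, mem_univ, true_and]
        exact Or.inr (Or.inr ⟨⟨i, hi⟩, by simp⟩)
      have hmem' : s(X (k + j), X (k + j + 1)) ∈
          bicycle (m := k + j) (fun i => X i) ⟨k - i₀, by omega⟩ ⟨b, by omega⟩ := by
        simp only [bicycle, mem_insert, mem_image, mem_univ, true_and]
        exact Or.inr (Or.inl (by simp [hb]))
      have hmem'' : ∀ i ≤ k + j, s(X i, X (i + 1)) ∈
          bicycle (m := k + j) (fun i => X i) ⟨k - i₀, by omega⟩ ⟨b, by omega⟩ := by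
        intro i hi
        rcases Nat.lt_or_eq_of_le hi with h | h
        · exact hmem i h
        · rw [h]; exact hmem'
      intro e he
      simp only [mem_insert, mem_image, mem_range] at he
      rcases he with h | ⟨i, hi, h⟩
      · rw [h]
        have := hmem'' k (by omega)
        rwa [hXk, hXw0] at this
      · rw [← h]
        by_cases h1 : k < i
        · rw [hstep2 i h1]
          exact hmem'' i (by omega)
        · rcases Nat.eq_zero_or_pos i with h0 | h0
          · subst h0
            simp only [bicycle, mem_insert]
            exact Or.inl (by simp [hX0])
          · have := hstep1 (i - 1) (by omega)
            rw [show i - 1 + 1 = i by omega] at this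
            rw [this, Sym2.eq_swap]
            have := hmem'' (i - 1) (by omega)
            rwa [show i - 1 + 1 = i by omega] at this
    refine le_trans (le_of_eq ?_) (card_le_card hsub)
    rw [card_insert_of_notMem, card_image_of_injOn, card_range]
    · intro i hi i' hi' h
      exact hXinj hi hi' (hinj (hXD _) (hXD _) h)
    · simp only [mem_image, not_exists, not_and]
      exact fun i _ => hne _ (hXD _)

/-- In a bicycle-free graph the edges can be assigned pairwise distinct endpoints. By Hall's
theorem it suffices that no edge subset spans fewer vertices than it has edges; a smallest violating
subset is a functional graph plus one edge. -/
lemma exists_endpoint {V : Type*} [Fintype V] [DecidableEq V] (H : Finset (Sym2 V))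
    (hH : ∀ (m : ℕ) (x : Fin (m + 1) → V) (a b : Fin (m + 1)), bicycle x a b ⊆ H →
      (bicycle x a b).card ≤ m + 1) :
    ∃ φ : H → V, Function.Injective φ ∧ ∀ e : H, φ e ∈ e.1 := by
  classical
  -- Hall's condition for edge sets
  have key : ∀ (c : ℕ) (F : Finset (Sym2 V)), F.card = c → F ⊆ H →
      F.card ≤ (F.biUnion Sym2.toFinset).card := by
    intro c
    induction c using Nat.strong_induction_on with
    | _ c ih =>
    intro F hFc hFH
    by_contra hlt
    push Not at hlt
    have hFne : F.Nonempty := by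
      rw [← card_pos]; omega
    obtain ⟨e, he⟩ := hFne
    have hcard : (F.erase e).card = F.card - 1 := card_erase_of_mem he
    have hpos : 0 < F.card := card_pos.2 ⟨e, he⟩
    have hall : ∃ φ : {e'' // e'' ∈ F.erase e} → V, Function.Injective φ ∧
        ∀ e', φ e' ∈ e'.1.toFinset := by
      refine (all_card_le_biUnion_card_iff_exists_injective
        (fun e' : {e'' // e'' ∈ F.erase e} => e'.1.toFinset)).1 ?_
      intro S
      have h1 : (S.map (Function.Embedding.subtype _)).card = S.card := card_map _
      have h2 : S.map (Function.Embedding.subtype _) ⊆ F.erase e := by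
        intro y hy
        simp only [Finset.mem_map, Function.Embedding.subtype_apply] at hy
        obtain ⟨z, _, rfl⟩ := hy
        exact z.2
      have h3 := ih _ (by have := card_le_card h2; omega) (S.map (Function.Embedding.subtype _)) rfl
        (h2.trans ((erase_subset _ _).trans hFH))
      rw [h1] at h3
      refine h3.trans (card_le_card ?_)
      intro y hy
      simp only [mem_biUnion, Finset.mem_map, Function.Embedding.subtype_apply] at hy ⊢
      obtain ⟨_, ⟨z, hz, rfl⟩, hy⟩ := hy
      exact ⟨z, hz, hy⟩
    obtain ⟨φ, hφ, hφm⟩ := hall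
    set D := F.biUnion Sym2.toFinset with hD
    have himg : (univ.image φ) = D := by
      refine eq_of_subset_of_card_le ?_ ?_
      · intro y hy
        simp only [mem_image, mem_univ, true_and] at hy
        obtain ⟨z, rfl⟩ := hy
        exact mem_biUnion.2 ⟨z.1, (mem_erase.1 z.2).2, hφm z⟩
      · rw [card_image_of_injective _ hφ, card_univ, Fintype.card_coe]
        omega
    have hchoose : ∀ y : V, ∃ z : V, y ∈ D → ∃ e' : {e'' // e'' ∈ F.erase e}, φ e' = y ∧
        e'.1 = s(y, z) := by
      intro y
      by_cases hy : y ∈ D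
      · rw [← himg] at hy
        simp only [mem_image, mem_univ, true_and] at hy
        obtain ⟨e', rfl⟩ := hy
        obtain ⟨z, hz⟩ := Sym2.mem_iff_exists.1 (Sym2.mem_toFinset.1 (hφm e'))
        exact ⟨z, fun _ => ⟨e', rfl, hz⟩⟩
      · exact ⟨y, fun h => absurd h hy⟩
    choose f hf using hchoose
    have hfe : ∀ y ∈ D, s(y, f y) ∈ F.erase e := by
      intro y hy
      obtain ⟨e', -, h⟩ := hf y hy
      rw [← h]; exact e'.2
    obtain ⟨u, w⟩ := e
    obtain ⟨m, x, a, b, hsub, hc⟩ := bicycle_of_map D f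
      (fun y hy => mem_biUnion.2 ⟨_, (mem_erase.1 (hfe y hy)).2, by simp⟩)
      (by
        intro y hy y' hy' h
        obtain ⟨e1, h1, h1'⟩ := hf y hy
        obtain ⟨e2, h2, h2'⟩ := hf y' hy'
        have : e1 = e2 := Subtype.ext (by rw [h1', h2']; exact h)
        rw [← h1, ← h2, this])
      u w (mem_biUnion.2 ⟨_, he, by simp⟩) (mem_biUnion.2 ⟨_, he, by simp⟩)
      (fun y hy => (mem_erase.1 (hfe y hy)).1)
    have := hH m x a b (hsub.trans (by
      intro y hy
      rcases mem_insert.1 hy with h | h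
      · rw [h]; exact hFH he
      · obtain ⟨z, hz, rfl⟩ := mem_image.1 h
        exact hFH (mem_erase.1 (hfe z hz)).2))
    omega
  obtain ⟨φ, h1, h2⟩ := (all_card_le_biUnion_card_iff_exists_injective
    (fun e' : H => e'.1.toFinset)).1 (by
      intro S
      have h1 : (S.map (Function.Embedding.subtype _)).card = S.card := card_map _
      have h3 := key _ (S.map (Function.Embedding.subtype _)) rfl (by
        intro y hy
        simp only [Finset.mem_map, Function.Embedding.subtype_apply] at hy
        obtain ⟨z, _, rfl⟩ := hy
        exact z.2)
      rw [h1] at h3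
      refine h3.trans (card_le_card ?_)
      intro y hy
      simp only [mem_biUnion, Finset.mem_map, Function.Embedding.subtype_apply] at hy ⊢
      obtain ⟨_, ⟨z, hz, rfl⟩, hy⟩ := hy
      exact ⟨z, hz, hy⟩)
  exact ⟨φ, h1, fun e => Sym2.mem_toFinset.1 (h2 e)⟩

/-! ### Encoding functional graphs -/

/-- The graph encoded by `(g, T)`, where the iterates of `g` are meant to reach fixed points
(roots): the edges `i — g i` of the forest, and for each `t ∈ T` an edge from `t` to its root. -/
def codeGraph {W : Type*} [Fintype W] (g : W → W) (T : Finset W) : Set (Sym2 W) :=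
  {e | ¬ e.IsDiag ∧ ((∃ i, e = s(i, g i)) ∨
    ∃ t ∈ T, ∃ r, g r = r ∧ (∃ i, g^[i] t = r) ∧ e = s(t, r))}

lemma exists_equiv_of_key {W β : Type*} [Fintype W] [LinearOrder β] (key : W → β)
    (hkey : Function.Injective key) {N : ℕ} (hN : Fintype.card W = N) :
    ∃ θ : W ≃ Fin N, ∀ x y, θ x ≤ θ y ↔ key x ≤ key y := by
  let : LinearOrder W := LinearOrder.lift' key hkey
  let θ := Fintype.orderIsoFinOfCardEq W hN
  exact ⟨θ.symm.toEquiv, fun x y => θ.symm.le_iff_le⟩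

/-- A rooted forest, presented by its parent map `g`, has a breadth-first labelling making `g`
monotone: order the vertices lexicographically by their paths read from the root. -/
lemma exists_monotone_labelling {W : Type*} [Fintype W] {N : ℕ} (hN : Fintype.card W = N)
    (g : W → W) (hg : ∀ x, ∃ i, g (g^[i] x) = g^[i] x) :
    ∃ θ : W ≃ Fin N, ∀ x y, θ x ≤ θ y → θ (g x) ≤ θ (g y) := by
  classical
  let : LinearOrder W := LinearOrder.lift' (Fintype.equivFinOfCardEq hN) (Equiv.injective _)
  choose d hd using hg
  have hstay : ∀ x k, g^[d x + k] x = g^[d x] x := by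
    intro x k
    induction k with
    | zero => rfl
    | succ k ih => rw [← add_assoc, Function.iterate_succ_apply', ih, hd]
  set M := (univ.sup d) + 1 with hM
  have hMfix : ∀ x, g^[M] (g x) = g^[M] x := by
    intro x
    have hx : d x ≤ univ.sup d := le_sup (mem_univ x)
    rw [← Function.iterate_succ_apply]
    have h1 := hstay x (M + 1 - d x)
    have h2 := hstay x (M - d x)
    rw [show d x + (M + 1 - d x) = M.succ by omega] at h1
    rw [show d x + (M - d x) = M by omega] at h2
    rw [h1, h2]
  -- the ancestors of `x`, listed from the root down to `x`
  let key : W → Lex (Fin (M + 1) → W) := fun x => toLex fun i => g^[M - i] x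
  have hkey : Function.Injective key := by
    intro x y h
    have := congrFun (toLex.injective h) (Fin.last M)
    simpa using this
  obtain ⟨θ, hθ⟩ := exists_equiv_of_key key hkey hN
  refine ⟨θ, fun x y hxy => ?_⟩
  rw [hθ] at hxy ⊢
  by_cases hgxy : g x = g y
  · rw [hgxy]
  rcases hxy.lt_or_eq with hlt | heq
  swap
  · exact absurd (congrArg g (hkey heq)) hgxy
  refine le_of_lt ?_
  obtain ⟨i, hi, hlti⟩ := hlt
  change ∀ j : Fin (M + 1), j < i → g^[M - j] x = g^[M - j] y at hi
  change g^[M - i] x < g^[M - i] y at hlti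
  have hiM : (i : ℕ) < M := by
    by_contra hcon
    have := hi ⟨M - 1, by omega⟩ (by rw [Fin.lt_def]; simp only; omega)
    simp only at this
    rw [show M - (M - 1) = 1 by omega] at this
    exact hgxy this
  rcases Nat.eq_zero_or_pos (i : ℕ) with h0 | h0
  · refine ⟨0, fun j hj => absurd hj (by simp), ?_⟩
    change g^[M - ((0 : Fin (M + 1)) : ℕ)] (g x) < g^[M - ((0 : Fin (M + 1)) : ℕ)] (g y)
    rw [h0] at hlti
    simpa [hMfix] using hlti
  · refine ⟨⟨i + 1, by omega⟩, ?_, ?_⟩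
    · intro j hj
      change g^[M - j] (g x) = g^[M - j] (g y)
      rw [Fin.lt_def] at hj
      simp only at hj
      rcases Nat.eq_zero_or_pos (j : ℕ) with hj0 | hj0
      · have := hi 0 (by rw [Fin.lt_def]; simpa using h0)
        simp only [Fin.val_zero, Nat.sub_zero] at this
        simpa [hj0, hMfix] using this
      · have := hi ⟨j - 1, by omega⟩ (by rw [Fin.lt_def]; simp only; omega)
        simp only at this
        rw [← Function.iterate_succ_apply, ← Function.iterate_succ_apply,
          show (M - (j : ℕ)).succ = M - (j - 1) by omega]
        exact this
    · change g^[M - (i + 1)] (g x) < g^[M - (i + 1)] (g y)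
      rw [← Function.iterate_succ_apply, ← Function.iterate_succ_apply,
        show (M - (i + 1 : ℕ)).succ = M - i by omega]
      exact hlti

/-- Cutting each cycle of `f` at its least vertex `z` leaves a forest; the removed edge `z — f z`
joins `f z` to its root, so it is recovered by putting `f z` into `T`. -/
lemma exists_cut {W : Type*} [Fintype W] (f : W → W) :
    ∃ (g : W → W) (T : Finset W), (∀ x, ∃ i, g (g^[i] x) = g^[i] x) ∧
      codeGraph g T = {e | ¬ e.IsDiag ∧ ∃ z, e = s(z, f z)} := by
  classical
  let : LinearOrder W := LinearOrder.lift' (Fintype.equivFin W) (Equiv.injective _)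
  set R : Set W := {x | x ∈ Function.periodicPts f ∧ ∀ i, x ≤ f^[i] x} with hR
  let g : W → W := fun x => if x ∈ R then x else f x
  have hgR : ∀ x ∈ R, g x = x := fun x hx => if_pos hx
  have hgnR : ∀ x, x ∉ R → g x = f x := fun x hx => if_neg hx
  have hexR : ∀ x, ∃ i, f^[i] x ∈ R := by
    intro x
    obtain ⟨i, j, hij, h⟩ : ∃ i j, i < j ∧ f^[i] x = f^[j] x := by
      obtain ⟨i, j, hij, h⟩ := Finite.exists_ne_map_eq_of_infinite (fun i : ℕ => f^[i] x)
      rcases lt_or_gt_of_ne hij with h' | h'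
      · exact ⟨i, j, h', h⟩
      · exact ⟨j, i, h', h.symm⟩
    have hper : f^[i] x ∈ Function.periodicPts f := by
      refine ⟨j - i, by omega, ?_⟩
      change f^[j - i] (f^[i] x) = f^[i] x
      rw [← Function.iterate_add_apply, show j - i + i = j by omega, h]
    obtain ⟨z, ⟨k, hk⟩, hz⟩ := Set.exists_min_image (Set.range fun k : ℕ => f^[k] (f^[i] x)) id
      (Set.toFinite _) ⟨_, 0, rfl⟩
    refine ⟨k + i, ?_⟩
    rw [Function.iterate_add_apply]
    refine ⟨?_, ?_⟩
    · obtain ⟨m, hm, hm'⟩ := hper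
      exact ⟨m, hm, hm'.apply_iterate k⟩
    · intro l
      rw [← Function.iterate_add_apply f l k]
      have := hz _ ⟨l + k, rfl⟩
      simp only [id] at this hk
      rw [hk]
      exact this
  have hgit : ∀ x, ∃ i, f^[i] x ∈ R ∧ g^[i] x = f^[i] x := by
    intro x
    have hs := Nat.find_spec (hexR x)
    have hmin := fun i => Nat.find_min (m := i) (hexR x)
    refine ⟨Nat.find (hexR x), hs, ?_⟩
    have : ∀ i ≤ Nat.find (hexR x), g^[i] x = f^[i] x := by
      intro i
      induction i with
      | zero => intro _; rfl
      | succ i ih =>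
        intro hi
        rw [Function.iterate_succ_apply', Function.iterate_succ_apply', ih (by omega)]
        exact hgnR _ (hmin i (by omega))
    exact this _ le_rfl
  have hfixit : ∀ r, g r = r → ∀ k, g^[k] r = r := by
    intro r hr k
    exact Function.iterate_fixed hr k
  have hback : ∀ z ∈ R, ∃ i, g^[i] (f z) = z := by
    intro z hz
    obtain ⟨i, hi, hgi⟩ := hgit (f z)
    refine ⟨i, ?_⟩
    rw [hgi]
    rw [← Function.iterate_succ_apply] at hi ⊢
    refine le_antisymm ?_ (hz.2 _)
    obtain ⟨m, hm, hm'⟩ := hz.1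
    have hmul : f^[m * i.succ] z = z := (hm'.mul_const i.succ)
    have h1 := hi.2 ((m - 1) * i.succ)
    rw [← Function.iterate_add_apply] at h1
    have h2 : (m - 1) * i.succ + i.succ = m * i.succ := by
      rcases m with _ | m
      · omega
      · simp; ring
    rwa [h2, hmul] at h1
  refine ⟨g, univ.filter fun t => ∃ z ∈ R, t = f z, ?_, ?_⟩
  · intro x
    obtain ⟨i, hi, hgi⟩ := hgit x
    exact ⟨i, by rw [hgi]; exact hgR _ hi⟩
  · ext e
    simp only [codeGraph, Set.mem_ofPred_eq, mem_filter, mem_univ, true_and]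
    refine and_congr_right fun hd => ⟨?_, ?_⟩
    · rintro (⟨i, rfl⟩ | ⟨t, ⟨z, hz, rfl⟩, r, hr, ⟨i, hi⟩, rfl⟩)
      · by_cases hiR : i ∈ R
        · rw [hgR i hiR] at hd
          exact absurd (by simp) hd
        · exact ⟨i, by rw [hgnR i hiR]⟩
      · obtain ⟨j, hj⟩ := hback z hz
        have h1 : g^[j + i] (f z) = r := by
          rw [Function.iterate_add_apply, hi, hfixit r hr]
        have h2 : g^[i + j] (f z) = z := by
          rw [Function.iterate_add_apply, hj, hfixit z (hgR z hz)]
        rw [add_comm, h2] at h1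
        exact ⟨z, by rw [← h1, Sym2.eq_swap]⟩
    · rintro ⟨z, rfl⟩
      by_cases hzR : z ∈ R
      · exact Or.inr ⟨f z, ⟨z, hzR, rfl⟩, z, hgR z hzR, hback z hzR, Sym2.eq_swap⟩
      · exact Or.inl ⟨z, by rw [hgnR z hzR]⟩

lemma codeGraph_conj {W W' : Type*} [Fintype W] [Fintype W'] (θ : W ≃ W') (g : W → W)
    (T : Finset W) (e : Sym2 W) :
    e.map θ ∈ codeGraph (θ ∘ g ∘ θ.symm) (T.map θ.toEmbedding) ↔ e ∈ codeGraph g T := by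
  have hit : ∀ i t, (θ ∘ g ∘ θ.symm)^[i] (θ t) = θ (g^[i] t) := by
    intro i t
    have : Function.Semiconj θ g (θ ∘ g ∘ θ.symm) := fun x => by simp
    exact ((this.iterate_right i) t).symm
  have hmap : ∀ x y, e.map θ = s(θ x, θ y) ↔ e = s(x, y) := by
    intro x y
    rw [← Sym2.map_mk]
    exact (Sym2.map.injective θ.injective).eq_iff
  simp only [codeGraph, Set.mem_ofPred_eq, Sym2.isDiag_map θ.injective]
  refine and_congr_right fun _ => or_congr ?_ ?_
  · rw [← θ.exists_congr_right]
    simp [hmap]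
  · rw [← θ.exists_congr_right]
    refine exists_congr fun t => and_congr (by simp) ?_
    rw [← θ.exists_congr_right]
    simp [hmap, hit]

/-- Up to relabelling, a functional graph on `N` vertices is encoded by a monotone self-map of
`Fin N` and a subset of `Fin N`. -/
lemma exists_code {W : Type*} [Fintype W] {N : ℕ} (hN : Fintype.card W = N) (f : W → W) :
    ∃ (θ : W ≃ Fin N) (g : Fin N → Fin N) (T : Finset (Fin N)), Monotone g ∧
      ∀ e : Sym2 W, e.map θ ∈ codeGraph g T ↔ ¬ e.IsDiag ∧ ∃ z, e = s(z, f z) := by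
  obtain ⟨g, T, hg, hT⟩ := exists_cut f
  obtain ⟨θ, hθ⟩ := exists_monotone_labelling hN g hg
  refine ⟨θ, θ ∘ g ∘ θ.symm, T.map θ.toEmbedding, ?_, ?_⟩
  · intro x y hxy
    exact hθ _ _ (by simpa using hxy)
  · intro e
    rw [codeGraph_conj, hT]
    rfl

/-- A monotone `g` is determined by the range of the strictly increasing map `i ↦ g i + i`. -/
lemma card_monotone_le (N : ℕ) :
    Nat.card {g : Fin N → Fin N // Monotone g} ≤ 4 ^ N := by
  classical
  have hlt : ∀ (g : Fin N → Fin N) (i : Fin N), (g i : ℕ) + i < 2 * N := by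
    intro g i; omega
  let F : {g : Fin N → Fin N // Monotone g} → Set (Fin (2 * N)) :=
    fun g => Set.range fun i => (⟨g.1 i + i, hlt g.1 i⟩ : Fin (2 * N))
  have hF : Function.Injective F := by
    intro g g' h
    have hs : ∀ g : {g : Fin N → Fin N // Monotone g},
        StrictMono fun i => (⟨g.1 i + i, hlt g.1 i⟩ : Fin (2 * N)) := by
      intro g i j hij
      have h1 : ((g.1 i : Fin N) : ℕ) ≤ g.1 j := g.2 hij.le
      have h2 : (i : ℕ) < j := hij
      simp only [Fin.mk_lt_mk]
      omega
    have := (StrictMono.range_inj (hs g) (hs g')).1 h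
    ext i
    have := congrArg Fin.val (congrFun this i)
    simp only at this
    omega
  calc Nat.card {g : Fin N → Fin N // Monotone g} ≤ Nat.card (Set (Fin (2 * N))) :=
        Nat.card_le_card_of_injective F hF
    _ = 4 ^ N := by
        rw [Nat.card_eq_fintype_card, Fintype.card_set, Fintype.card_fin, pow_mul]; norm_num

/-! ### Counting invariant bicycle-free graphs -/

lemma sym2_map_cancel {α β : Type*} (f : α → β) (g : β → α) (h : ∀ x, g (f x) = x)
    (e : Sym2 α) : (e.map f).map g = e := by
  induction e with
  | _ x y => simp [h]

/-- The permutation of the potential edges induced by a permutation of the vertices. -/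
def edgePerm {n : ℕ} (π : Equiv.Perm (Fin n)) : Equiv.Perm (Edge n) where
  toFun := edgeMap π
  invFun := edgeMap π⁻¹
  left_inv e := by
    exact Subtype.ext (sym2_map_cancel _ _ (by simp) e.1)
  right_inv e := by
    exact Subtype.ext (sym2_map_cancel _ _ (by simp) e.1)

lemma edgePerm_mul {n : ℕ} (π σ : Equiv.Perm (Fin n)) :
    edgePerm (π * σ) = edgePerm π * edgePerm σ := by
  ext1 e
  apply Subtype.ext
  change Sym2.map (π * σ) e.1 = Sym2.map π (Sym2.map σ e.1)
  rw [Sym2.map_map]; rfl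

/-- `H` contains no bicycle whose `m + 2` edges are all distinct. -/
def NoBicycle {n : ℕ} (H : Finset (Edge n)) : Prop :=
  ∀ (m : ℕ) (x : Fin (m + 1) → Fin n) (a b : Fin (m + 1)),
    bicycle x a b ⊆ H.map (Function.Embedding.subtype _) → (bicycle x a b).card ≤ m + 1

/-- Codes for isomorphism classes of bicycle-free graphs on at most `n` vertices: a vertex count
`N`, a monotone self-map of `Fin N` and a subset of `Fin N`; there are at most `8 ^ N` of each size. -/
abbrev Code (n : ℕ) :=
  (N : Fin (n + 1)) × ({g : Fin N → Fin N // Monotone g} × Finset (Fin N))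

open Classical in
instance (n : ℕ) : Fintype (Code n) := inferInstance

open Classical in
/-- The graph with code `c`, placed on the first `c.1` vertices of `Fin n`. -/
def decode {n : ℕ} (c : Code n) : Finset (Edge n) :=
  univ.filter fun e => ∃ e' ∈ codeGraph c.2.1.1 c.2.2,
    e.1 = e'.map (Fin.castLE (Nat.lt_succ_iff.1 c.1.2))

/-- Every bicycle-free graph is isomorphic to a decoded one. The code lives on the non-isolated
vertices, whence the bound on its size. -/
lemma exists_decode {n : ℕ} (H : Finset (Edge n)) (hH : NoBicycle H) :
    ∃ (c : Code n) (σ : Equiv.Perm (Fin n)), (c.1 : ℕ) ≤ 2 * H.card ∧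
      H = (decode c).map (edgePerm σ).toEmbedding := by
  classical
  set H' : Finset (Sym2 (Fin n)) := H.map (Function.Embedding.subtype _) with hH'
  have hH'mem : ∀ e : Edge n, e.1 ∈ H' ↔ e ∈ H := by
    intro e
    simp [hH', e.2]
  have hH'diag : ∀ e ∈ H', ¬ e.IsDiag := by
    intro e he
    simp only [hH', Finset.mem_map, Function.Embedding.subtype_apply] at he
    obtain ⟨a, _, rfl⟩ := he
    exact a.2
  obtain ⟨φ, hφ, hφm⟩ := exists_endpoint H' hH
  set S := H'.biUnion Sym2.toFinset with hS
  have hScard : S.card ≤ 2 * H.card := by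
    calc S.card ≤ H'.card * 2 := card_biUnion_le_card_mul _ _ _ (fun e _ => by
          rw [Sym2.card_toFinset]; split_ifs <;> omega)
      _ = 2 * H.card := by rw [hH', card_map, mul_comm]
  have hSn : S.card ≤ n := by simpa using card_le_univ S
  have hchoose : ∀ y : {y // y ∈ S}, ∃ z : {y // y ∈ S}, (∀ e : H', φ e = y.1 → e.1 = s(y.1, z.1)) ∧
      (s(y.1, z.1) ∈ H' ∨ z = y) := by
    intro y
    by_cases hy : ∃ e : H', φ e = y.1
    · obtain ⟨e, he⟩ := hy
      obtain ⟨z, hz⟩ := Sym2.mem_iff_exists.1 (hφm e)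
      rw [he] at hz
      refine ⟨⟨z, mem_biUnion.2 ⟨e.1, e.2, by rw [hz]; simp⟩⟩, ?_, Or.inl ?_⟩
      · intro e' he'
        rw [hφ (he'.trans he.symm)]
        exact hz
      · change s(y.1, z) ∈ H'
        rw [← hz]; exact e.2
    · push Not at hy
      exact ⟨y, fun e he => absurd he (hy e), Or.inr rfl⟩
  choose f hf1 hf2 using hchoose
  have hedge : ∀ e : Edge n, e ∈ H ↔ ∃ e'' : Sym2 {y // y ∈ S},
      (¬ e''.IsDiag ∧ ∃ z, e'' = s(z, f z)) ∧ e.1 = e''.map Subtype.val := by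
    intro e
    rw [← hH'mem]
    constructor
    · intro he
      have hy : φ ⟨e.1, he⟩ ∈ S := mem_biUnion.2 ⟨e.1, he, Sym2.mem_toFinset.2 (hφm ⟨e.1, he⟩)⟩
      have h := hf1 ⟨_, hy⟩ ⟨e.1, he⟩ rfl
      simp only at h
      refine ⟨s(⟨_, hy⟩, f ⟨_, hy⟩), ⟨?_, _, rfl⟩, ?_⟩
      · intro hd
        rw [Sym2.mk_isDiag_iff] at hd
        apply e.2
        rw [h, Sym2.mk_isDiag_iff]
        exact congrArg Subtype.val hd
      · exact h
    · rintro ⟨e'', ⟨hd, z, rfl⟩, he⟩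
      rw [he]
      rcases hf2 z with h | h
      · exact h
      · rw [h] at hd
        exact absurd (by simp) hd
  obtain ⟨θ, g, T, hg, hcode⟩ := exists_code (W := {y // y ∈ S}) (N := S.card) (by simp) f
  let ι : Fin S.card ≃ {x // x ∈ Set.range (Fin.castLE hSn)} :=
    Equiv.ofInjective _ (Fin.castLE_injective hSn)
  let σ : Equiv.Perm (Fin n) := Equiv.extendSubtype (p := fun x => x ∈ Set.range (Fin.castLE hSn))
    (q := fun x => x ∈ S) (ι.symm.trans θ.symm)
  have hσ : ∀ w : {y // y ∈ S}, σ (Fin.castLE hSn (θ w)) = w.1 := by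
    intro w
    have h := Equiv.extendSubtype_apply_of_mem (p := fun x => x ∈ Set.range (Fin.castLE hSn))
      (q := fun x => x ∈ S) (ι.symm.trans θ.symm) (Fin.castLE hSn (θ w)) ⟨_, rfl⟩
    refine h.trans ?_
    have : ι.symm ⟨Fin.castLE hSn (θ w), ⟨_, rfl⟩⟩ = θ w := by
      rw [Equiv.symm_apply_eq]; rfl
    simp [this]
  refine ⟨⟨⟨S.card, by omega⟩, ⟨g, hg⟩, T⟩, σ, hScard, ?_⟩
  ext e
  rw [mem_map_equiv, hedge]
  simp only [decode, mem_filter, mem_univ, true_and]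
  have hinv : ∀ e' : Sym2 (Fin n), ((edgePerm σ).symm e).1 = e' ↔ e.1 = e'.map σ := by
    intro e'
    change Sym2.map (σ⁻¹ : Equiv.Perm (Fin n)) e.1 = e' ↔ _
    constructor
    · rintro rfl
      exact (sym2_map_cancel _ _ (by simp) e.1).symm
    · intro h
      rw [h]
      exact sym2_map_cancel _ _ (by simp) e'
  simp only [hinv, Sym2.map_map]
  have hcomp : ∀ e'' : Sym2 {y // y ∈ S}, Sym2.map (σ ∘ Fin.castLE hSn) (e''.map θ) =
      e''.map Subtype.val := by
    intro e''
    rw [Sym2.map_map]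
    congr 1
    ext w
    simp only [Function.comp]
    rw [hσ]
  constructor
  · rintro ⟨e'', h, he⟩
    exact ⟨e''.map θ, (hcode e'').2 h, by rw [he]; exact (hcomp e'').symm⟩
  · rintro ⟨e', h, he⟩
    have he' : (e'.map θ.symm).map θ = e' := sym2_map_cancel _ _ (by simp) e'
    refine ⟨e'.map θ.symm, (hcode _).1 (by rw [he']; exact h), ?_⟩
    rw [← hcomp, he']
    exact he

lemma sum_code_le (n : ℕ) : ∑ c : Code n, ((1 : ℝ) / 10) ^ (c.1 : ℕ) ≤ 5 := by
  classical
  rw [Fintype.sum_sigma]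
  calc ∑ N : Fin (n + 1), ∑ _c : {g : Fin N → Fin N // Monotone g} × Finset (Fin N),
        ((1 : ℝ) / 10) ^ (N : ℕ)
      ≤ ∑ N : Fin (n + 1), ((4 : ℝ) / 5) ^ (N : ℕ) := by
        refine sum_le_sum fun N _ => ?_
        rw [sum_const, card_univ, Fintype.card_prod, nsmul_eq_mul, Fintype.card_finset,
          Fintype.card_fin]
        have h := card_monotone_le (N : ℕ)
        rw [Nat.card_eq_fintype_card] at h
        have h' : ((Fintype.card {g : Fin N → Fin N // Monotone g} * 2 ^ (N : ℕ) : ℕ) : ℝ) ≤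
            8 ^ (N : ℕ) := by
          have : Fintype.card {g : Fin N → Fin N // Monotone g} * 2 ^ (N : ℕ) ≤ 8 ^ (N : ℕ) := by
            calc _ ≤ 4 ^ (N : ℕ) * 2 ^ (N : ℕ) := Nat.mul_le_mul_right _ h
              _ = 8 ^ (N : ℕ) := by rw [← mul_pow]; norm_num
          exact_mod_cast this
        calc _ ≤ (8 : ℝ) ^ (N : ℕ) * (1 / 10) ^ (N : ℕ) := by gcongr
          _ = (4 / 5) ^ (N : ℕ) := by rw [← mul_pow]; norm_num
    _ = ∑ N ∈ range (n + 1), ((4 : ℝ) / 5) ^ N := by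
        rw [Finset.sum_range]
    _ ≤ 5 := by
        rw [geom_sum_eq (by norm_num)]
        have : (0 : ℝ) ≤ (4 / 5) ^ (n + 1) := by positivity
        rw [div_le_iff_of_neg (by norm_num)]
        linarith

open Classical in
/-- The pairs `(σ, H)` with `σ` an automorphism of `H` inject into codes times permutations: if
`H = σ₀ (decode c)`, map `(σ, H)` to `(c, σ σ₀)`, from which `H = σ H = σ σ₀ (decode c)` is recovered.
So automorphism counts cancel against sizes of isomorphism classes, and only the number of codes
matters. -/
lemma sum_invariant_le (n : ℕ) (s : ℝ) (hs0 : 0 ≤ s) (hs : s ≤ 1 / 10) :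
    ∑ σ : Equiv.Perm (Fin n), ∑ H : Finset (Edge n) with
      NoBicycle H ∧ H.map (edgePerm σ).toEmbedding = H, s ^ (2 * H.card) ≤
      5 * (n.factorial : ℝ) := by
  have : Nonempty (Code n) := ⟨⟨0, ⟨fun i => i, monotone_id⟩, ∅⟩⟩
  choose! c σ₀ hc hdec using fun H : Finset (Edge n) => exists_decode H
  simp only [sum_filter]
  rw [← Fintype.sum_prod_type', ← sum_filter]
  have h1 : ∀ q ∈ (univ : Finset (Equiv.Perm (Fin n) × Finset (Edge n))).filter (fun q =>
      NoBicycle q.2 ∧ q.2.map (edgePerm q.1).toEmbedding = q.2),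
      s ^ (2 * q.2.card) ≤ ((1 : ℝ) / 10) ^ ((c q.2).1 : ℕ) := by
    intro q hq
    simp only [mem_filter, mem_univ, true_and] at hq
    calc s ^ (2 * q.2.card) ≤ (1 / 10) ^ (2 * q.2.card) := by gcongr
      _ ≤ _ := pow_le_pow_of_le_one (by norm_num) (by norm_num) (hc _ hq.1)
  refine (sum_le_sum h1).trans ?_
  calc _ = ∑ x ∈ ((univ : Finset (Equiv.Perm (Fin n) × Finset (Edge n))).filter (fun q =>
          NoBicycle q.2 ∧ q.2.map (edgePerm q.1).toEmbedding = q.2)).image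
            (fun q => (c q.2, q.1 * σ₀ q.2)), ((1 : ℝ) / 10) ^ (x.1.1 : ℕ) := by
        rw [sum_image]
        rintro ⟨σ, H⟩ h ⟨σ', H'⟩ h' heq
        simp only [coe_filter, mem_univ, true_and, Set.mem_ofPred_eq] at h h'
        simp only [Prod.mk.injEq] at heq
        have e1 : ∀ (σ : Equiv.Perm (Fin n)) (H : Finset (Edge n)),
            NoBicycle H ∧ H.map (edgePerm σ).toEmbedding = H →
            H = (decode (c H)).map (edgePerm (σ * σ₀ H)).toEmbedding := by
          intro σ H h
          conv_lhs => rw [← h.2, hdec H h.1, Finset.map_map]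
          rw [edgePerm_mul]
          rfl
        have hHH : H = H' := by
          rw [e1 σ H h, e1 σ' H' h', heq.1, heq.2]
        subst hHH
        simpa using heq.2
    _ ≤ ∑ x : Code n × Equiv.Perm (Fin n), ((1 : ℝ) / 10) ^ (x.1.1 : ℕ) :=
        sum_le_univ_sum_of_nonneg fun x => by positivity
    _ = (∑ c : Code n, ((1 : ℝ) / 10) ^ (c.1 : ℕ)) * n.factorial := by
        rw [Fintype.sum_prod_type, sum_mul]
        refine sum_congr rfl fun c _ => ?_
        simp [Fintype.card_perm, mul_comm]
    _ ≤ 5 * n.factorial := by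
        gcongr
        exact sum_code_le n

/-! ### Cyclic products of a copy-or-resample kernel -/

/-- The intersection graph of two edge indicators. -/
def both {E : Type*} [Fintype E] (a b : E → Bool) : Finset E :=
  univ.filter fun e => a e = true ∧ b e = true

/-- `H` is the largest `τ`-invariant subset of the intersection of `ab.1` and `ab.2`, i.e. the union
of the `τ`-orbits on which both indicators are constantly `true`. -/
def IsCore {E : Type*} [Fintype E] (τ : Equiv.Perm E) (ab : (E → Bool) × (E → Bool))
    (H : Finset E) : Prop :=
  H.map τ.toEmbedding = H ∧ H ⊆ both ab.1 ab.2 ∧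
    ∀ S : Finset E, S.map τ.toEmbedding = S → S ⊆ both ab.1 ab.2 → S ⊆ H

lemma exists_core {E : Type*} [Fintype E] (τ : Equiv.Perm E)
    (ab : (E → Bool) × (E → Bool)) : ∃ H, IsCore τ ab H := by
  classical
  refine ⟨univ.filter fun e => ∃ S : Finset E, S.map τ.toEmbedding = S ∧ S ⊆ both ab.1 ab.2 ∧
    e ∈ S, ?_, ?_, ?_⟩
  · refine eq_of_subset_of_card_le ?_ (by rw [card_map])
    intro e he
    simp only [Finset.mem_map, mem_filter, mem_univ, true_and, Equiv.coe_toEmbedding] at he ⊢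
    obtain ⟨e', ⟨S, h1, h2, h3⟩, rfl⟩ := he
    exact ⟨S, h1, h2, by rw [← h1]; exact mem_map_of_mem _ h3⟩
  · intro e he
    simp only [mem_filter, mem_univ, true_and] at he
    obtain ⟨S, h1, h2, h3⟩ := he
    exact h2 h3
  · intro S h1 h2 e he
    simp only [mem_filter, mem_univ, true_and]
    exact ⟨S, h1, h2, he⟩

/-- Outside the core, suppose that each step of the cyclic chain `b e → a e → b (τ e)` either copies
the previous bit (`none`) or overwrites it (`some c`), according to `F`. Then `F` and the core
determine `(a, b)`: two solutions that differ at some edge differ in the same direction along its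
whole orbit, so one of them is constantly `true` there and the orbit lies in its core. -/
lemma core_unique {E : Type*} [Fintype E] (τ : Equiv.Perm E) (H : Finset E)
    (F : E → Option Bool × Option Bool) (x y : (E → Bool) × (E → Bool))
    (hx : IsCore τ x H) (hy : IsCore τ y H)
    (hxF : ∀ e ∉ H, x.1 e = (F e).1.getD (x.2 e) ∧ x.2 (τ e) = (F e).2.getD (x.1 e))
    (hyF : ∀ e ∉ H, y.1 e = (F e).1.getD (y.2 e) ∧ y.2 (τ e) = (F e).2.getD (y.1 e)) :
    x = y := by
  classical
  have hinv : ∀ e, e ∉ H → τ.symm e ∉ H := by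
    intro e he hcon
    apply he
    rw [← hx.1]
    simpa using mem_map_of_mem τ.toEmbedding hcon
  -- the edges where `x.2` is `true` and `y.2` is `false` form an invariant set inside the core
  have key : ∀ x y : (E → Bool) × (E → Bool), IsCore τ x H →
      (∀ e ∉ H, x.1 e = (F e).1.getD (x.2 e) ∧ x.2 (τ e) = (F e).2.getD (x.1 e)) →
      (∀ e ∉ H, y.1 e = (F e).1.getD (y.2 e) ∧ y.2 (τ e) = (F e).2.getD (y.1 e)) →
      ∀ e ∉ H, ¬ (x.2 e = true ∧ y.2 e = false) := by
    intro x y hx hxF hyF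
    set D : Finset E := univ.filter fun e => e ∉ H ∧ x.2 e = true ∧ y.2 e = false with hD
    have hstep : ∀ e ∈ D, τ.symm e ∈ D ∧ x.1 (τ.symm e) = true := by
      intro e he
      simp only [hD, mem_filter, mem_univ, true_and] at he ⊢
      obtain ⟨h1, h2, h3⟩ := he
      have h4 := hxF _ (hinv e h1)
      have h5 := hyF _ (hinv e h1)
      rw [Equiv.apply_symm_apply] at h4 h5
      refine ⟨⟨hinv e h1, ?_⟩, ?_⟩
      all_goals
        revert h4 h5
        rw [h2, h3]
        rcases (F (τ.symm e)).1 with _ | c <;> rcases (F (τ.symm e)).2 with _ | c' <;>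
          simp <;> grind
    have hDinv : D.map τ.toEmbedding = D := by
      symm
      refine eq_of_subset_of_card_le ?_ (by rw [card_map])
      intro e he
      simp only [Finset.mem_map, Equiv.coe_toEmbedding]
      exact ⟨τ.symm e, (hstep e he).1, by simp⟩
    have hDsub : D ⊆ both x.1 x.2 := by
      intro e he
      have h1 : τ e ∈ D := by
        rw [← hDinv]; exact mem_map_of_mem τ.toEmbedding he
      have h2 := (hstep _ h1).2
      rw [Equiv.symm_apply_apply] at h2
      simp only [hD, mem_filter, mem_univ, true_and] at he
      simp only [both, mem_filter, mem_univ, true_and]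
      exact ⟨h2, he.2.1⟩
    have hDH := hx.2.2 D hDinv hDsub
    intro e he hcon
    exact he (hDH (by simp only [hD, mem_filter, mem_univ, true_and]; exact ⟨he, hcon⟩))
  have h2 : ∀ e ∉ H, x.2 e = y.2 e := by
    intro e he
    have h1 := key x y hx hxF hyF e he
    have h2 := key y x hy hyF hxF e he
    revert h1 h2
    rcases x.2 e <;> rcases y.2 e <;> simp
  have hb : ∀ e ∈ H, (x.1 e = true ∧ x.2 e = true) ∧ y.1 e = true ∧ y.2 e = true := by
    intro e he
    have h1 := hx.2.1 he
    have h2 := hy.2.1 he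
    simp only [both, mem_filter, mem_univ, true_and] at h1 h2
    exact ⟨h1, h2⟩
  refine Prod.ext (funext fun e => ?_) (funext fun e => ?_)
  · by_cases he : e ∈ H
    · rw [(hb e he).1.1, (hb e he).2.1]
    · rw [(hxF e he).1, (hyF e he).1, h2 e he]
  · by_cases he : e ∈ H
    · rw [(hb e he).1.2, (hb e he).2.2]
    · exact h2 e he

open Classical in
/-- Contribution of a given core `H` to the trace of a product of the kernel `K` along the orbits of
`τ`, where `K` copies or resamples its input with mixing weights `κ`. On `H` every factor is
`K true true = s`; off `H`, each of the random instructions, of total weight one, is compatible with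
at most one configuration. -/
lemma sum_core_le {E : Type*} [Fintype E] [DecidableEq E] (τ : Equiv.Perm E) (H : Finset E)
    (K : Bool → Bool → ℝ) (κ : Option Bool → ℝ) (s : ℝ)
    (hκ0 : ∀ c, 0 ≤ κ c) (hκ1 : ∑ c, κ c = 1)
    (hK : ∀ x y, K x y = ∑ c, κ c * if y = c.getD x then 1 else 0) (hKs : K true true = s) :
    ∑ ab : (E → Bool) × (E → Bool) with IsCore τ ab H,
      ∏ e, (K (ab.2 e) (ab.1 e) * K (ab.1 e) (ab.2 (τ e))) ≤ s ^ (2 * H.card) := by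
  have hs0 : 0 ≤ s := by
    rw [← hKs, hK]
    exact sum_nonneg fun c _ => mul_nonneg (hκ0 c) (by split_ifs <;> simp)
  have hκκ : ∑ c : Option Bool × Option Bool, κ c.1 * κ c.2 = 1 := by
    rw [Fintype.sum_prod_type, ← Finset.sum_mul_sum, hκ1, one_mul]
  have hcompat : ∀ ab ∈ (univ : Finset ((E → Bool) × (E → Bool))).filter (IsCore τ · H),
      ∏ e, (K (ab.2 e) (ab.1 e) * K (ab.1 e) (ab.2 (τ e))) =
      s ^ (2 * H.card) * ∑ F : E → Option Bool × Option Bool, (∏ e, κ (F e).1 * κ (F e).2) *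
        if ∀ e ∉ H, ab.1 e = (F e).1.getD (ab.2 e) ∧ ab.2 (τ e) = (F e).2.getD (ab.1 e)
        then 1 else 0 := by
    intro ab hab
    simp only [mem_filter, mem_univ, true_and] at hab
    have hone : ∀ e ∈ H, ab.1 e = true ∧ ab.2 e = true := by
      intro e he
      have := hab.2.1 he
      simpa only [both, mem_filter, mem_univ, true_and] using this
    have hterm : ∀ e, K (ab.2 e) (ab.1 e) * K (ab.1 e) (ab.2 (τ e)) =
        (if e ∈ H then s ^ 2 else 1) * ∑ c : Option Bool × Option Bool, (κ c.1 * κ c.2) *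
          if e ∉ H → ab.1 e = c.1.getD (ab.2 e) ∧ ab.2 (τ e) = c.2.getD (ab.1 e)
          then 1 else 0 := by
      intro e
      by_cases he : e ∈ H
      · have hτ : τ e ∈ H := by
          rw [← hab.1]; exact mem_map_of_mem τ.toEmbedding he
        rw [(hone e he).1, (hone e he).2, (hone _ hτ).2, hKs]
        simp [he, hκκ, sq]
      · simp only [he, not_false_eq_true, forall_const, if_false, one_mul]
        rw [hK, hK, Finset.sum_mul_sum, Fintype.sum_prod_type]
        refine sum_congr rfl fun c _ => sum_congr rfl fun c' _ => ?_
        simp only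
        by_cases h1 : ab.1 e = c.getD (ab.2 e) <;> by_cases h2 : ab.2 (τ e) = c'.getD (ab.1 e) <;>
          simp [h1, h2]
    rw [prod_congr rfl fun e _ => hterm e, prod_mul_distrib]
    congr 1
    · rw [prod_ite_mem, univ_inter, prod_const, pow_mul]
    · rw [Finset.prod_univ_sum]
      simp only [Fintype.piFinset_univ]
      refine sum_congr rfl fun F _ => ?_
      rw [prod_mul_distrib]
      congr 1
      rw [Finset.prod_ite_zero]
      simp
  rw [sum_congr rfl hcompat, ← mul_sum, sum_comm]
  refine mul_le_of_le_one_right (by positivity) ?_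
  calc _ ≤ ∑ F : E → Option Bool × Option Bool, ∏ e, κ (F e).1 * κ (F e).2 := by
        refine sum_le_sum fun F _ => ?_
        rw [← mul_sum]
        refine mul_le_of_le_one_right
          (prod_nonneg fun e _ => mul_nonneg (hκ0 _) (hκ0 _)) ?_
        rw [← sum_filter, sum_const, nsmul_eq_mul, mul_one]
        have : #{ab ∈ ({ab | IsCore τ ab H} : Finset ((E → Bool) × (E → Bool))) |
            ∀ e ∉ H, ab.1 e = (F e).1.getD (ab.2 e) ∧ ab.2 (τ e) = (F e).2.getD (ab.1 e)} ≤ 1 := by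
          rw [card_le_one]
          intro x hx y hy
          simp only [mem_filter, mem_univ, true_and] at hx hy
          exact core_unique τ H F x y hx.1 hy.1 hx.2 hy.2
        exact_mod_cast this
    _ = 1 := by
        have := Finset.prod_univ_sum (fun _ : E => (univ : Finset (Option Bool × Option Bool)))
          (fun _ c => κ c.1 * κ c.2)
        simp only [Fintype.piFinset_univ] at this
        rw [← this]
        simp [hκκ]

open Classical in
/-- Splitting configurations by their core, which inherits any decreasing property `C` of the
intersection graph. -/
lemma sum_truncated_le {E : Type*} [Fintype E] [DecidableEq E] (τ : Equiv.Perm E)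
    (C : Finset E → Prop)
    (hC : ∀ S T : Finset E, S ⊆ T → C T → C S)
    (K : Bool → Bool → ℝ) (κ : Option Bool → ℝ) (s : ℝ)
    (hκ0 : ∀ c, 0 ≤ κ c) (hκ1 : ∑ c, κ c = 1)
    (hK : ∀ x y, K x y = ∑ c, κ c * if y = c.getD x then 1 else 0) (hKs : K true true = s) :
    ∑ ab : (E → Bool) × (E → Bool) with C (both ab.1 ab.2),
      ∏ e, (K (ab.2 e) (ab.1 e) * K (ab.1 e) (ab.2 (τ e))) ≤
    ∑ H : Finset E with C H ∧ H.map τ.toEmbedding = H, s ^ (2 * H.card) := by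
  have hK0 : ∀ x y, 0 ≤ K x y := by
    intro x y
    rw [hK]
    exact sum_nonneg fun c _ => mul_nonneg (hκ0 c) (by split_ifs <;> simp)
  have hW0 : ∀ ab : (E → Bool) × (E → Bool),
      0 ≤ ∏ e, (K (ab.2 e) (ab.1 e) * K (ab.1 e) (ab.2 (τ e))) :=
    fun ab => prod_nonneg fun e _ => mul_nonneg (hK0 _ _) (hK0 _ _)
  calc _ ≤ ∑ ab : (E → Bool) × (E → Bool),
        ∑ H : Finset E with C H ∧ H.map τ.toEmbedding = H, if IsCore τ ab H then
          ∏ e, (K (ab.2 e) (ab.1 e) * K (ab.1 e) (ab.2 (τ e))) else 0 := by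
        rw [sum_filter]
        refine sum_le_sum fun ab _ => ?_
        have hnn : ∀ H : Finset E, 0 ≤ if IsCore τ ab H then
          ∏ e, (K (ab.2 e) (ab.1 e) * K (ab.1 e) (ab.2 (τ e))) else 0 := by
          intro H
          split_ifs
          · exact hW0 ab
          · exact le_rfl
        split_ifs with hc
        · obtain ⟨H, hH⟩ := exists_core τ ab
          refine le_trans (le_of_eq ?_) (single_le_sum (fun H _ => hnn H)
            (mem_filter.2 ⟨mem_univ H, hC _ _ hH.2.1 hc, hH.1⟩))
          rw [if_pos hH]
        · exact sum_nonneg fun H _ => hnn H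
    _ = ∑ H : Finset E with C H ∧ H.map τ.toEmbedding = H,
          ∑ ab : (E → Bool) × (E → Bool) with IsCore τ ab H,
          ∏ e, (K (ab.2 e) (ab.1 e) * K (ab.1 e) (ab.2 (τ e))) := by
        rw [sum_comm]
        refine sum_congr rfl fun H _ => ?_
        rw [sum_filter]
    _ ≤ _ := sum_le_sum fun H _ => sum_core_le τ H K κ s hκ0 hκ1 hK hKs

/-! ### Single-edge laws and the first moment of bicycles -/

/-- The mass function of the Bernoulli distribution with parameter `t`. -/
def bernMass (t : ℝ) (a : Bool) : ℝ := if a then t else 1 - t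

/-- The joint mass function of `(G_e U_e, G_e V_e)` for a single edge. -/
def pairMass (p s : ℝ) (a b : Bool) : ℝ :=
  ∑ g : Bool, ∑ u : Bool, ∑ v : Bool, bernMass p g * bernMass s u * bernMass s v *
    if a = (g && u) ∧ b = (g && v) then 1 else 0

/-- The likelihood ratio of `pairMass` against two independent Bernoulli(`p s`) bits. At
`(true, true)` it is `p s² / (p s)² = 1 / p`, also used when `s = 0`. -/
def pairRatio (p s : ℝ) (a b : Bool) : ℝ :=
  if a && b then 1 / p else if a || b then (1 - s) / (1 - p * s) else
    (1 - 2 * (p * s) + p * s ^ 2) / (1 - p * s) ^ 2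

/-- Mixing weights writing the conditional law of one bit of a correlated pair given the other as
copying the other bit (`none`) or outputting an independent `y` (`some y`). -/
def mixMass (p s : ℝ) : Option Bool → ℝ
  | none => s * (1 - p) / (1 - p * s)
  | some y => (1 - s * (1 - p) / (1 - p * s)) * bernMass (p * s) y

lemma pairMass_tt (p s : ℝ) : pairMass p s true true = p * s ^ 2 := by
  simp [pairMass, bernMass]; ring

lemma pairMass_eq {p s : ℝ} (hp0 : 0 < p) (hp1 : p < 1) (hs1 : s ≤ 1)
    (a b : Bool) : pairMass p s a b =
      bernMass (p * s) a * bernMass (p * s) b * pairRatio p s a b := by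
  have h : 1 - p * s ≠ 0 := by nlinarith
  cases a <;> cases b <;> simp [pairMass, bernMass, pairRatio] <;> field_simp <;> ring

lemma bernMass_nonneg {t : ℝ} (h0 : 0 ≤ t) (h1 : t ≤ 1) (a : Bool) : 0 ≤ bernMass t a := by
  cases a <;> simp [bernMass] <;> linarith

lemma pairMass_nonneg {p s : ℝ} (hp0 : 0 < p) (hp1 : p < 1) (hs0 : 0 ≤ s) (hs1 : s ≤ 1)
    (a b : Bool) : 0 ≤ pairMass p s a b := by
  refine sum_nonneg fun g _ => sum_nonneg fun u _ => sum_nonneg fun v _ => ?_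
  have h1 := bernMass_nonneg hp0.le hp1.le g
  have h2 := bernMass_nonneg hs0 hs1 u
  have h3 := bernMass_nonneg hs0 hs1 v
  split_ifs <;> positivity

lemma pairMass_sum (p s : ℝ) : ∑ a, ∑ b, pairMass p s a b = 1 := by
  simp [pairMass, bernMass]; ring

lemma pairRatio_comm (p s : ℝ) (a b : Bool) : pairRatio p s a b = pairRatio p s b a := by
  cases a <;> cases b <;> simp [pairRatio]

lemma pairRatio_nonneg {p s : ℝ} (hp0 : 0 < p) (hp1 : p < 1) (hs1 : s ≤ 1)
    (a b : Bool) : 0 ≤ pairRatio p s a b := by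
  have h : 0 < 1 - p * s := by nlinarith
  have h2 : 0 ≤ 1 - s := by linarith
  have h3 : 0 ≤ 1 - 2 * (p * s) + p * s ^ 2 := by nlinarith [sq_nonneg (1 - s), sq_nonneg s]
  cases a <;> cases b <;> simp [pairRatio] <;> positivity

lemma mixMass_nonneg {p s : ℝ} (hp0 : 0 < p) (hp1 : p < 1) (hs0 : 0 ≤ s) (hs1 : s ≤ 1)
    (c : Option Bool) : 0 ≤ mixMass p s c := by
  have h : 0 < 1 - p * s := by nlinarith
  have h2 : 0 ≤ 1 - p := by linarith
  rcases c with _ | y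
  · simp only [mixMass]; positivity
  · simp only [mixMass]
    refine mul_nonneg ?_ (bernMass_nonneg (by positivity) (by nlinarith) y)
    rw [sub_nonneg, div_le_one h]
    nlinarith

lemma mixMass_sum (p s : ℝ) : ∑ c, mixMass p s c = 1 := by
  simp [Fintype.sum_option, mixMass, bernMass]; ring

lemma kernel_eq_mix {p s : ℝ} (hp0 : 0 < p) (hp1 : p < 1) (hs1 : s ≤ 1)
    (x y : Bool) : bernMass (p * s) y * pairRatio p s x y =
      ∑ c, mixMass p s c * if y = c.getD x then 1 else 0 := by
  have h : 1 - p * s ≠ 0 := by nlinarith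
  cases x <;> cases y <;> simp [Fintype.sum_option, mixMass, bernMass, pairRatio] <;>
    field_simp <;> ring

lemma sum_pairs_prod {E : Type*} [Fintype E] [DecidableEq E] (h : E → Bool → Bool → ℝ) :
    ∑ ab : (E → Bool) × (E → Bool), ∏ e, h e (ab.1 e) (ab.2 e) =
      ∏ e, ∑ x, ∑ y, h e x y := by
  rw [Fintype.sum_prod_type, Finset.prod_univ_sum]
  simp only [Fintype.piFinset_univ]
  refine sum_congr rfl fun a _ => ?_
  rw [Finset.prod_univ_sum]
  simp only [Fintype.piFinset_univ]

/-- The probability that a given edge set lies in the intersection graph. -/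
lemma sum_subset_both {E : Type*} [Fintype E] [DecidableEq E] (p s : ℝ) (F : Finset E) :
    ∑ ab : (E → Bool) × (E → Bool) with F ⊆ both ab.1 ab.2,
      ∏ e, pairMass p s (ab.1 e) (ab.2 e) = (p * s ^ 2) ^ F.card := by
  rw [sum_filter]
  calc _ = ∑ ab : (E → Bool) × (E → Bool), ∏ e, (fun e x y => if e ∈ F → x = true ∧ y = true then
        pairMass p s x y else 0) e (ab.1 e) (ab.2 e) := by
        refine sum_congr rfl fun ab _ => ?_
        rw [Finset.prod_ite_zero]
        congr 1
        simp [both, Finset.subset_iff]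
    _ = ∏ e : E, if e ∈ F then p * s ^ 2 else 1 := by
        rw [sum_pairs_prod fun e x y => if e ∈ F → x = true ∧ y = true then
          pairMass p s x y else 0]
        refine prod_congr rfl fun e _ => ?_
        by_cases he : e ∈ F
        · simp [he, ← pairMass_tt]
        · simp only [he, false_imp_iff, if_true, pairMass_sum, if_false]
    _ = _ := by simp

lemma sum_sq_geom_le {r : ℝ} (hr0 : 0 ≤ r) (hr1 : r < 1) (M : ℕ) :
    ∑ m ∈ range M, ((m : ℝ) + 1) ^ 2 * r ^ (m + 1) ≤ 2 / (1 - r) ^ 3 := by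
  have hn : ‖r‖ < 1 := by rwa [Real.norm_of_nonneg hr0]
  have h1 := tsum_choose_mul_geometric_of_norm_lt_one 2 hn
  have h2 := summable_choose_mul_geometric_of_norm_lt_one 2 hn
  have h3 := h2.sum_le_tsum (range M) (fun m _ => by positivity)
  rw [h1] at h3
  calc _ ≤ ∑ m ∈ range M, 2 * (((m + 2).choose 2 : ℕ) * r ^ m) := by
        refine sum_le_sum fun m _ => ?_
        have hc : (((m + 2).choose 2 : ℕ) : ℝ) = (m + 2) * (m + 1) / 2 := by
          rw [Nat.cast_choose_two]; push_cast; ring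
        rw [hc, pow_succ r m]
        have hrm : 0 ≤ r ^ m := by positivity
        have : ((m : ℝ) + 1) ^ 2 * r ≤ (m + 2) * (m + 1) := by
          have : (0 : ℝ) ≤ m := Nat.cast_nonneg m
          nlinarith [mul_nonneg (sq_nonneg ((m : ℝ) + 1)) (sub_nonneg.2 hr1.le)]
        nlinarith [mul_le_mul_of_nonneg_right this hrm]
    _ ≤ _ := by
        rw [← mul_sum]
        have : 2 / (1 - r) ^ 3 = 2 * (1 / (1 - r) ^ (2 + 1)) := by ring
        rw [this]
        linarith

open Classical in
/-- First moment bound for bicycles in the intersection graph, which has edge density `p s²`: there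
are `n ^ (m + 1) (m + 1)²` of them with `m + 2` edges. -/
lemma prob_bicycle_le {n : ℕ} {p s : ℝ} (hp0 : 0 < p) (hp1 : p < 1) (hs0 : 0 ≤ s) (hs1 : s ≤ 1)
    (hr : n * (p * s ^ 2) < 1) :
    ∑ ab : (Edge n → Bool) × (Edge n → Bool) with ¬ NoBicycle (both ab.1 ab.2),
      ∏ e, pairMass p s (ab.1 e) (ab.2 e) ≤ p * s ^ 2 * (2 / (1 - n * (p * s ^ 2)) ^ 3) := by
  set q := p * s ^ 2 with hq
  have hq0 : 0 ≤ q := by positivity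
  have hq1 : q ≤ 1 := by nlinarith [sq_nonneg s]
  have hw0 : ∀ ab : (Edge n → Bool) × (Edge n → Bool),
      0 ≤ ∏ e, pairMass p s (ab.1 e) (ab.2 e) :=
    fun ab => prod_nonneg fun e _ => pairMass_nonneg hp0 hp1 hs0 hs1 _ _
  set M := Fintype.card (Edge n)
  have hone : ∀ (m : ℕ) (z : (Fin (m + 1) → Fin n) × Fin (m + 1) × Fin (m + 1)),
      ∑ ab : (Edge n → Bool) × (Edge n → Bool), (if
        (bicycle z.1 z.2.1 z.2.2 ⊆ (both ab.1 ab.2).map (Function.Embedding.subtype _) ∧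
          m + 2 ≤ (bicycle z.1 z.2.1 z.2.2).card) then
        ∏ e, pairMass p s (ab.1 e) (ab.2 e) else 0) ≤ q ^ (m + 2) := by
    intro m z
    set B := bicycle z.1 z.2.1 z.2.2
    -- unless the bicycle is loopless, it cannot lie in a simple graph and the sum vanishes
    set F : Finset (Edge n) := univ.filter fun e => e.1 ∈ B with hF
    by_cases hex : ∃ ab : (Edge n → Bool) × (Edge n → Bool),
        B ⊆ (both ab.1 ab.2).map (Function.Embedding.subtype _) ∧ m + 2 ≤ B.card
    · obtain ⟨ab₀, h1, h2⟩ := hex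
      have hFB : F.map (Function.Embedding.subtype _) = B := by
        ext e
        simp only [hF, Finset.mem_map, mem_filter, mem_univ, true_and,
          Function.Embedding.subtype_apply]
        constructor
        · rintro ⟨e', h, rfl⟩; exact h
        · intro he
          have := h1 he
          simp only [Finset.mem_map, Function.Embedding.subtype_apply] at this
          obtain ⟨e', _, rfl⟩ := this
          exact ⟨e', he, rfl⟩
      have hcard : F.card = B.card := by rw [← hFB, card_map]
      calc _ ≤ ∑ ab : (Edge n → Bool) × (Edge n → Bool), (if F ⊆ both ab.1 ab.2 then
            ∏ e, pairMass p s (ab.1 e) (ab.2 e) else 0) := by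
            refine sum_le_sum fun ab _ => ?_
            split_ifs with h3 h4 h4
            · exact le_rfl
            · exact absurd (by rw [← hFB] at h3; exact map_subset_map.1 h3.1) h4
            · exact hw0 ab
            · exact le_rfl
        _ = q ^ F.card := by rw [← sum_filter, sum_subset_both]
        _ ≤ q ^ (m + 2) := pow_le_pow_of_le_one hq0 hq1 (by omega)
    · push Not at hex
      rw [sum_eq_zero]
      · positivity
      · intro ab _
        rw [if_neg]
        rintro ⟨h1, h2⟩
        exact absurd h2 (not_le.2 (hex ab h1))
  calc _ ≤ ∑ ab : (Edge n → Bool) × (Edge n → Bool), ∑ m ∈ range M,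
        ∑ z : (Fin (m + 1) → Fin n) × Fin (m + 1) × Fin (m + 1), (if
        (bicycle z.1 z.2.1 z.2.2 ⊆ (both ab.1 ab.2).map (Function.Embedding.subtype _) ∧
          m + 2 ≤ (bicycle z.1 z.2.1 z.2.2).card) then
        ∏ e, pairMass p s (ab.1 e) (ab.2 e) else 0) := by
        rw [sum_filter]
        refine sum_le_sum fun ab _ => ?_
        have hnn : ∀ (m : ℕ) (z : (Fin (m + 1) → Fin n) × Fin (m + 1) × Fin (m + 1)), 0 ≤ (if
            (bicycle z.1 z.2.1 z.2.2 ⊆ (both ab.1 ab.2).map (Function.Embedding.subtype _) ∧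
              m + 2 ≤ (bicycle z.1 z.2.1 z.2.2).card) then
            ∏ e, pairMass p s (ab.1 e) (ab.2 e) else 0) := by
          intro m z
          split_ifs
          · exact hw0 ab
          · exact le_rfl
        split_ifs with hbad
        · exact sum_nonneg fun m _ => sum_nonneg fun z _ => hnn m z
        · simp only [NoBicycle, not_forall, not_le] at hbad
          obtain ⟨m, x, a, b, h1, h2⟩ := hbad
          have hm : m ∈ range M := by
            have h3 := card_le_card h1
            rw [card_map] at h3
            have h4 := card_le_univ (both ab.1 ab.2)
            rw [mem_range]
            omega
          refine le_trans ?_ (single_le_sum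
            (fun m _ => sum_nonneg fun z _ => hnn m z) hm)
          refine le_trans (le_of_eq ?_) (single_le_sum
            (fun z _ => hnn m z) (mem_univ (x, a, b)))
          rw [if_pos ⟨h1, h2⟩]
    _ = ∑ m ∈ range M, ∑ z : (Fin (m + 1) → Fin n) × Fin (m + 1) × Fin (m + 1),
        ∑ ab : (Edge n → Bool) × (Edge n → Bool), (if
        (bicycle z.1 z.2.1 z.2.2 ⊆ (both ab.1 ab.2).map (Function.Embedding.subtype _) ∧
          m + 2 ≤ (bicycle z.1 z.2.1 z.2.2).card) then
        ∏ e, pairMass p s (ab.1 e) (ab.2 e) else 0) := by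
        rw [sum_comm]
        exact sum_congr rfl fun m _ => sum_comm
    _ ≤ ∑ m ∈ range M, q * (((m : ℝ) + 1) ^ 2 * (n * q) ^ (m + 1)) := by
        refine sum_le_sum fun m _ => ?_
        refine (sum_le_sum fun z _ => hone m z).trans (le_of_eq ?_)
        rw [sum_const, card_univ, nsmul_eq_mul]
        simp only [Fintype.card_prod, Fintype.card_fun, Fintype.card_fin]
        push_cast
        ring
    _ ≤ _ := by
        rw [← mul_sum]
        exact mul_le_mul_of_nonneg_left (sum_sq_geom_le (by positivity) hr M) hq0

/-! ### Truncated likelihood ratio -/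

/-- The mass function of the null model. -/
def nullMass {n : ℕ} (p s : ℝ) (ab : (Edge n → Bool) × (Edge n → Bool)) : ℝ :=
  ∏ e, bernMass (p * s) (ab.1 e) * bernMass (p * s) (ab.2 e)

/-- The mass function of the planted model. -/
def plantMass {n : ℕ} (p s : ℝ) (ab : (Edge n → Bool) × (Edge n → Bool)) : ℝ :=
  (n.factorial : ℝ)⁻¹ * ∑ π : Equiv.Perm (Fin n),
    ∏ e, pairMass p s (ab.1 e) (ab.2 (edgePerm π e))

open Classical in
/-- The likelihood ratio against the null model of the planted model truncated to the event that
the intersection graph, aligned by the hidden permutation, has no bicycle. -/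
def truncRatio {n : ℕ} (p s : ℝ) (ab : (Edge n → Bool) × (Edge n → Bool)) : ℝ :=
  (n.factorial : ℝ)⁻¹ * ∑ π : Equiv.Perm (Fin n),
    if NoBicycle (both ab.1 (ab.2 ∘ edgePerm π)) then
      ∏ e, pairRatio p s (ab.1 e) (ab.2 (edgePerm π e)) else 0

lemma NoBicycle.mono {n : ℕ} {S T : Finset (Edge n)} (h : S ⊆ T) (hT : NoBicycle T) :
    NoBicycle S :=
  fun m x a b hb => hT m x a b (hb.trans (map_subset_map.2 h))

lemma sum_relabel {E : Type*} [Fintype E] [DecidableEq E] (τ : Equiv.Perm E)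
    (f : (E → Bool) × (E → Bool) → ℝ) :
    ∑ ab : (E → Bool) × (E → Bool), f (ab.1, ab.2 ∘ τ) = ∑ ab, f ab :=
  Equiv.sum_comp ((Equiv.refl (E → Bool)).prodCongr (τ.symm.arrowCongr (Equiv.refl Bool))) f

lemma nullMass_nonneg {n : ℕ} {p s : ℝ} (hp0 : 0 < p) (hp1 : p < 1) (hs0 : 0 ≤ s) (hs1 : s ≤ 1)
    (ab : (Edge n → Bool) × (Edge n → Bool)) : 0 ≤ nullMass p s ab :=
  have h0 : 0 ≤ p * s := by positivity
  have h1 : p * s ≤ 1 := by nlinarith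
  prod_nonneg fun _ _ => mul_nonneg (bernMass_nonneg h0 h1 _) (bernMass_nonneg h0 h1 _)

lemma nullMass_relabel {n : ℕ} (p s : ℝ) (τ : Equiv.Perm (Edge n))
    (a b : Edge n → Bool) : nullMass p s (a, b ∘ τ) = nullMass p s (a, b) := by
  simp only [nullMass, prod_mul_distrib, Function.comp]
  rw [Equiv.prod_comp τ fun e => bernMass (p * s) (b e)]

lemma bernMass_sum (t : ℝ) : ∑ x, bernMass t x = 1 := by
  simp [bernMass]

lemma nullMass_sum (n : ℕ) (p s : ℝ) :
    ∑ ab : (Edge n → Bool) × (Edge n → Bool), nullMass p s ab = 1 := by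
  unfold nullMass
  rw [sum_pairs_prod fun _ x y => bernMass (p * s) x * bernMass (p * s) y]
  simp only [← mul_sum, bernMass_sum, mul_one, prod_const_one]

lemma plantMass_sum (n : ℕ) (p s : ℝ) :
    ∑ ab : (Edge n → Bool) × (Edge n → Bool), plantMass p s ab = 1 := by
  unfold plantMass
  rw [← mul_sum, sum_comm]
  have : ∀ π : Equiv.Perm (Fin n), ∑ ab : (Edge n → Bool) × (Edge n → Bool),
      ∏ e, pairMass p s (ab.1 e) (ab.2 (edgePerm π e)) = 1 := by
    intro π
    refine (sum_relabel (edgePerm π) fun ab => ∏ e, pairMass p s (ab.1 e) (ab.2 e)).trans ?_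
    rw [sum_pairs_prod fun _ => pairMass p s]
    simp only [pairMass_sum, prod_const_one]
  rw [sum_congr rfl fun π _ => this π, sum_const, card_univ, Fintype.card_perm, Fintype.card_fin,
    nsmul_eq_mul, mul_one, inv_mul_cancel₀ (by positivity)]

lemma truncRatio_nonneg {n : ℕ} {p s : ℝ} (hp0 : 0 < p) (hp1 : p < 1) (hs1 : s ≤ 1)
    (ab : (Edge n → Bool) × (Edge n → Bool)) : 0 ≤ truncRatio p s ab := by
  refine mul_nonneg (by positivity) (sum_nonneg fun π _ => ?_)
  split_ifs
  · exact prod_nonneg fun e _ => pairRatio_nonneg hp0 hp1 hs1 _ _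
  · exact le_rfl

lemma prod_pairMass_eq {n : ℕ} {p s : ℝ} (hp0 : 0 < p) (hp1 : p < 1) (hs1 : s ≤ 1)
    (ab : (Edge n → Bool) × (Edge n → Bool)) (π : Equiv.Perm (Fin n)) :
    ∏ e, pairMass p s (ab.1 e) (ab.2 (edgePerm π e)) =
      nullMass p s ab * ∏ e, pairRatio p s (ab.1 e) (ab.2 (edgePerm π e)) := by
  have := nullMass_relabel p s (edgePerm π) ab.1 ab.2
  rw [show ab = (ab.1, ab.2) from rfl, ← this, nullMass, ← prod_mul_distrib]
  exact prod_congr rfl fun e _ => pairMass_eq hp0 hp1 hs1 _ _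

open Classical in
lemma nullMass_mul_truncRatio {n : ℕ} {p s : ℝ} (hp0 : 0 < p) (hp1 : p < 1) (hs1 : s ≤ 1)
    (ab : (Edge n → Bool) × (Edge n → Bool)) :
    nullMass p s ab * truncRatio p s ab = (n.factorial : ℝ)⁻¹ * ∑ π : Equiv.Perm (Fin n),
      if NoBicycle (both ab.1 (ab.2 ∘ edgePerm π)) then
        ∏ e, pairMass p s (ab.1 e) (ab.2 (edgePerm π e)) else 0 := by
  rw [truncRatio, mul_left_comm, mul_sum]
  congr 1
  refine sum_congr rfl fun π _ => ?_
  rw [mul_ite, mul_zero, prod_pairMass_eq hp0 hp1 hs1]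

lemma trunc_le_plantMass {n : ℕ} {p s : ℝ} (hp0 : 0 < p) (hp1 : p < 1) (hs0 : 0 ≤ s)
    (hs1 : s ≤ 1) (ab : (Edge n → Bool) × (Edge n → Bool)) :
    nullMass p s ab * truncRatio p s ab ≤ plantMass p s ab := by
  rw [nullMass_mul_truncRatio hp0 hp1 hs1, plantMass]
  gcongr
  split_ifs
  · exact le_rfl
  · exact prod_nonneg fun e _ => pairMass_nonneg hp0 hp1 hs0 hs1 _ _

open Classical in
/-- The truncation keeps at least half of the planted mass. -/
lemma half_le_trunc {n : ℕ} {p s : ℝ} (hp0 : 0 < p) (hp1 : p < 1) (hs0 : 0 ≤ s) (hs1 : s ≤ 1)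
    (hr : n * (p * s ^ 2) < 1)
    (hsmall : p * s ^ 2 * (2 / (1 - n * (p * s ^ 2)) ^ 3) ≤ 1 / 2) :
    1 / 2 ≤ ∑ ab : (Edge n → Bool) × (Edge n → Bool), nullMass p s ab * truncRatio p s ab := by
  have h1 : ∀ π : Equiv.Perm (Fin n), 1 / 2 ≤ ∑ ab : (Edge n → Bool) × (Edge n → Bool),
      (if NoBicycle (both ab.1 (ab.2 ∘ edgePerm π)) then
        ∏ e, pairMass p s (ab.1 e) (ab.2 (edgePerm π e)) else 0) := by
    intro π
    refine le_of_le_of_eq ?_ (sum_relabel (edgePerm π) fun ab => if NoBicycle (both ab.1 ab.2) then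
        ∏ e, pairMass p s (ab.1 e) (ab.2 e) else 0).symm
    have h2 := prob_bicycle_le hp0 hp1 hs0 hs1 hr
    have h3 : ∑ ab : (Edge n → Bool) × (Edge n → Bool), ∏ e, pairMass p s (ab.1 e) (ab.2 e) = 1 := by
      rw [sum_pairs_prod fun _ => pairMass p s]
      simp only [pairMass_sum, prod_const_one]
    rw [← sum_filter]
    have h4 := sum_filter_add_sum_filter_not univ
      (fun ab : (Edge n → Bool) × (Edge n → Bool) => NoBicycle (both ab.1 ab.2))
      (fun ab => ∏ e, pairMass p s (ab.1 e) (ab.2 e))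
    linarith
  simp only [nullMass_mul_truncRatio hp0 hp1 hs1]
  rw [← mul_sum, sum_comm]
  have h5 := card_nsmul_le_sum univ _ _ fun π (_ : π ∈ (univ : Finset (Equiv.Perm (Fin n)))) => h1 π
  rw [card_univ, Fintype.card_perm, Fintype.card_fin, nsmul_eq_mul] at h5
  rw [inv_mul_eq_div, le_div_iff₀ (by positivity)]
  linarith

open Classical in
/-- The cross term of two permutations depends only on their quotient `σ`. It is the trace along the
orbits of `σ` of the conditional law of one bit of a correlated pair given the other. -/
lemma sum_cross_le {n : ℕ} {p s : ℝ} (hp0 : 0 < p) (hp1 : p < 1) (hs0 : 0 ≤ s) (hs1 : s ≤ 1)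
    (σ : Equiv.Perm (Fin n)) :
    ∑ ab : (Edge n → Bool) × (Edge n → Bool) with NoBicycle (both ab.1 ab.2),
      nullMass p s ab * ((∏ e, pairRatio p s (ab.1 e) (ab.2 e)) *
        ∏ e, pairRatio p s (ab.1 e) (ab.2 (edgePerm σ e))) ≤
    ∑ H : Finset (Edge n) with NoBicycle H ∧ H.map (edgePerm σ).toEmbedding = H,
      s ^ (2 * H.card) := by
  refine le_of_eq_of_le ?_ (sum_truncated_le (edgePerm σ) NoBicycle (fun _ _ h hT => NoBicycle.mono h hT)
    (fun x y => bernMass (p * s) y * pairRatio p s x y) (mixMass p s) s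
    (mixMass_nonneg hp0 hp1 hs0 hs1) (mixMass_sum p s) (kernel_eq_mix hp0 hp1 hs1) ?_)
  · refine sum_congr rfl fun ab _ => ?_
    simp only [nullMass, prod_mul_distrib]
    rw [Equiv.prod_comp (edgePerm σ) fun e => bernMass (p * s) (ab.2 e)]
    simp only [pairRatio_comm p s (ab.2 _)]
    ring
  · simp [bernMass, pairRatio]
    field_simp

open Classical in
/-- Second moment of the truncated likelihood ratio. One of the two truncation indicators suffices. -/
lemma second_moment_le {n : ℕ} {p s : ℝ} (hp0 : 0 < p) (hp1 : p < 1) (hs0 : 0 ≤ s)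
    (hs1 : s ≤ 1 / 10) :
    ∑ ab : (Edge n → Bool) × (Edge n → Bool), nullMass p s ab * truncRatio p s ab ^ 2 ≤ 5 := by
  have hs1' : s ≤ 1 := by linarith
  set N := (n.factorial : ℝ) with hN
  have hN0 : 0 < N := by positivity
  let R : Equiv.Perm (Fin n) → (Edge n → Bool) × (Edge n → Bool) → ℝ :=
    fun π ab => ∏ e, pairRatio p s (ab.1 e) (ab.2 (edgePerm π e))
  let I : Equiv.Perm (Fin n) → (Edge n → Bool) × (Edge n → Bool) → ℝ :=
    fun π ab => if NoBicycle (both ab.1 (ab.2 ∘ edgePerm π)) then 1 else 0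
  have hR0 : ∀ π ab, 0 ≤ R π ab := fun π ab =>
    prod_nonneg fun e _ => pairRatio_nonneg hp0 hp1 hs1' _ _
  have hI : ∀ π ab, 0 ≤ I π ab ∧ I π ab ≤ 1 := by
    intro π ab
    simp only [I]
    split_ifs <;> norm_num
  have hinner : ∀ π π' : Equiv.Perm (Fin n),
      ∑ ab, nullMass p s ab * (I π ab * R π ab * R π' ab) ≤
      ∑ H : Finset (Edge n) with NoBicycle H ∧ H.map (edgePerm (π⁻¹ * π')).toEmbedding = H,
        s ^ (2 * H.card) := by
    intro π π'
    refine le_of_eq_of_le ?_ (sum_cross_le hp0 hp1 hs0 hs1' (π⁻¹ * π'))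
    rw [sum_filter, ← sum_relabel (edgePerm π) fun ab => if NoBicycle (both ab.1 ab.2) then
      nullMass p s ab * ((∏ e, pairRatio p s (ab.1 e) (ab.2 e)) *
        ∏ e, pairRatio p s (ab.1 e) (ab.2 (edgePerm (π⁻¹ * π') e))) else 0]
    refine sum_congr rfl fun ab _ => ?_
    have h1 : ∀ e, edgePerm π (edgePerm (π⁻¹ * π') e) = edgePerm π' e := by
      intro e
      rw [← Equiv.Perm.mul_apply, ← edgePerm_mul, mul_inv_cancel_left]
    simp only [I, R, nullMass_relabel, Function.comp_apply, h1]
    split_ifs <;> simp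
  calc _ = N⁻¹ ^ 2 * ∑ π : Equiv.Perm (Fin n), ∑ π' : Equiv.Perm (Fin n),
        ∑ ab, nullMass p s ab * ((I π ab * R π ab) * (I π' ab * R π' ab)) := by
        have : ∀ ab : (Edge n → Bool) × (Edge n → Bool),
            truncRatio p s ab = N⁻¹ * ∑ π, I π ab * R π ab := by
          intro ab
          simp only [truncRatio, I, R, ite_mul, one_mul, zero_mul, hN]
        simp only [this, mul_pow]
        simp only [sq (∑ π, _), Finset.sum_mul_sum, mul_left_comm _ (N⁻¹ ^ 2), ← mul_sum]
        congr 1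
        simp only [mul_sum]
        rw [sum_comm]
        exact sum_congr rfl fun _ _ => sum_comm
    _ ≤ N⁻¹ ^ 2 * ∑ π : Equiv.Perm (Fin n), ∑ π' : Equiv.Perm (Fin n),
        ∑ H : Finset (Edge n) with NoBicycle H ∧ H.map (edgePerm (π⁻¹ * π')).toEmbedding = H,
        s ^ (2 * H.card) := by
        refine mul_le_mul_of_nonneg_left (sum_le_sum fun π _ => sum_le_sum fun π' _ =>
          le_trans (sum_le_sum fun ab _ => ?_) (hinner π π')) (by positivity)
        refine mul_le_mul_of_nonneg_left ?_ (nullMass_nonneg hp0 hp1 hs0 hs1' ab)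
        refine mul_le_mul_of_nonneg_left ?_ (mul_nonneg (hI _ _).1 (hR0 _ _))
        exact mul_le_of_le_one_left (hR0 _ _) (hI _ _).2
    _ ≤ N⁻¹ ^ 2 * ∑ π : Equiv.Perm (Fin n), 5 * N := by
        refine mul_le_mul_of_nonneg_left (sum_le_sum fun π _ => ?_) (by positivity)
        refine le_of_eq_of_le (Equiv.sum_comp (Equiv.mulLeft π⁻¹) fun σ =>
          ∑ H : Finset (Edge n) with NoBicycle H ∧ H.map (edgePerm σ).toEmbedding = H,
            s ^ (2 * H.card)) (sum_invariant_le n s hs0 hs1)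
    _ = 5 := by
        rw [sum_const, card_univ, Fintype.card_perm, Fintype.card_fin, nsmul_eq_mul, ← hN]
        field_simp

/-- If `P` dominates a measure of mass at least `1 / 2` whose density `ℓ` against `Q` has second
moment at most `5`, then by Cauchy–Schwarz any event with `Q S < 1 / 80` has truncated mass less than
`1 / 4`, so `P Sᶜ ≥ 1 / 4`. -/
lemma abs_sub_le_of_second_moment {Ω : Type*} [Fintype Ω] [DecidableEq Ω] (P Q ℓ : Ω → ℝ)
    (hQ0 : ∀ ω, 0 ≤ Q ω) (hℓ0 : ∀ ω, 0 ≤ ℓ ω) (hP : ∀ ω, Q ω * ℓ ω ≤ P ω)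
    (hP1 : ∑ ω, P ω = 1) (hQ1 : ∑ ω, Q ω = 1) (hhalf : 1 / 2 ≤ ∑ ω, Q ω * ℓ ω)
    (h5 : ∑ ω, Q ω * ℓ ω ^ 2 ≤ 5) (S : Finset Ω) :
    |∑ ω ∈ S, P ω - ∑ ω ∈ S, Q ω| ≤ 79 / 80 := by
  have hP0 : ∀ ω, 0 ≤ P ω := fun ω => (mul_nonneg (hQ0 ω) (hℓ0 ω)).trans (hP ω)
  have hside : ∀ S : Finset Ω, ∑ ω ∈ S, P ω - ∑ ω ∈ S, Q ω ≤ 79 / 80 := by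
    intro S
    have hPc := sum_add_sum_compl S P
    have hTc := sum_add_sum_compl S fun ω => Q ω * ℓ ω
    have hle : ∑ ω ∈ Sᶜ, Q ω * ℓ ω ≤ ∑ ω ∈ Sᶜ, P ω := sum_le_sum fun ω _ => hP ω
    have hPc0 : 0 ≤ ∑ ω ∈ Sᶜ, P ω := sum_nonneg fun ω _ => hP0 ω
    have hQS0 : 0 ≤ ∑ ω ∈ S, Q ω := sum_nonneg fun ω _ => hQ0 ω
    by_cases hx : 1 / 80 ≤ ∑ ω ∈ S, Q ω
    · linarith
    · have hCS := Finset.sum_sq_le_sum_mul_sum_of_sq_le_mul S (r := fun ω => Q ω * ℓ ω)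
        (f := Q) (g := fun ω => Q ω * ℓ ω ^ 2) (fun ω _ => hQ0 ω)
        (fun ω _ => mul_nonneg (hQ0 ω) (sq_nonneg _)) (fun ω _ => le_of_eq (by ring))
      have hg : ∑ ω ∈ S, Q ω * ℓ ω ^ 2 ≤ 5 :=
        (sum_le_univ_sum_of_nonneg fun ω => mul_nonneg (hQ0 ω) (sq_nonneg _)).trans h5
      have : (∑ ω ∈ S, Q ω * ℓ ω) ^ 2 < (1 / 4) ^ 2 := by
        have := mul_le_mul_of_nonneg_left hg hQS0
        linarith
      have := lt_of_pow_lt_pow_left₀ 2 (by norm_num) this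
      linarith
  rw [abs_le]
  refine ⟨?_, hside S⟩
  have h1 := hside Sᶜ
  have h2 := sum_add_sum_compl S P
  have h3 := sum_add_sum_compl S Q
  linarith

/-! ### From mass functions to measures -/

lemma bern_isProbabilityMeasure {t : ℝ} (h0 : 0 ≤ t) (h1 : t ≤ 1) :
    IsProbabilityMeasure (bern t) := by
  constructor
  simp only [bern, Measure.add_apply, Measure.smul_apply, measure_univ, smul_eq_mul, mul_one]
  rw [← ENNReal.ofReal_add h0 (by linarith)]
  simp

lemma bern_real_singleton {t : ℝ} (h0 : 0 ≤ t) (h1 : t ≤ 1) (x : Bool) :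
    (bern t).real {x} = bernMass t x := by
  have h2 : 0 ≤ 1 - t := by linarith
  cases x <;> simp [bern, bernMass, Measure.real, h0, h2]

lemma bernEdges_isProbabilityMeasure (n : ℕ) {t : ℝ} (h0 : 0 ≤ t) (h1 : t ≤ 1) :
    IsProbabilityMeasure (bernEdges n t) := by
  have := bern_isProbabilityMeasure h0 h1
  unfold bernEdges
  infer_instance

lemma bernEdges_real_singleton {n : ℕ} {t : ℝ} (h0 : 0 ≤ t) (h1 : t ≤ 1) (a : Edge n → Bool) :
    (bernEdges n t).real {a} = ∏ e, bernMass t (a e) := by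
  have := bern_isProbabilityMeasure h0 h1
  rw [Measure.real, bernEdges, Measure.pi_singleton, ENNReal.toReal_prod]
  exact prod_congr rfl fun e _ => bern_real_singleton h0 h1 (a e)

lemma permUniform_real_singleton {n : ℕ} (π : Equiv.Perm (Fin n)) :
    (permUniform n).real {π} = (n.factorial : ℝ)⁻¹ := by
  rw [Measure.real, permUniform, PMF.toMeasure_apply_singleton _ _ (MeasurableSet.singleton π),
    PMF.uniformOfFintype_apply, Fintype.card_perm, Fintype.card_fin]
  simp

lemma QER_real_singleton {n : ℕ} {p s : ℝ} (h0 : 0 ≤ p * s) (h1 : p * s ≤ 1)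
    (ab : (Edge n → Bool) × (Edge n → Bool)) : (QER n p s).real {ab} = nullMass p s ab := by
  have := bernEdges_isProbabilityMeasure n h0 h1
  rw [QER, show ({ab} : Set ((Edge n → Bool) × (Edge n → Bool))) = {ab.1} ×ˢ {ab.2} by simp,
    measureReal_prod_prod, bernEdges_real_singleton h0 h1, bernEdges_real_singleton h0 h1,
    nullMass, prod_mul_distrib]

lemma sum_triples_prod {E : Type*} [Fintype E] [DecidableEq E] (h : E → Bool → Bool → Bool → ℝ) :
    ∑ g : E → Bool, ∑ u : E → Bool, ∑ v : E → Bool, ∏ e, h e (g e) (u e) (v e) =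
      ∏ e, ∑ x, ∑ y, ∑ z, h e x y z := by
  rw [Finset.prod_univ_sum]
  simp only [Fintype.piFinset_univ]
  refine sum_congr rfl fun g _ => ?_
  rw [Finset.prod_univ_sum]
  simp only [Fintype.piFinset_univ]
  refine sum_congr rfl fun u _ => ?_
  rw [Finset.prod_univ_sum]
  simp only [Fintype.piFinset_univ]

instance permUniform_isProbabilityMeasure (n : ℕ) : IsProbabilityMeasure (permUniform n) := by
  unfold permUniform
  infer_instance

lemma PER_isProbabilityMeasure (n : ℕ) {p s : ℝ} (hp0 : 0 ≤ p) (hp1 : p ≤ 1) (hs0 : 0 ≤ s)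
    (hs1 : s ≤ 1) : IsProbabilityMeasure (PER n p s) := by
  have := bernEdges_isProbabilityMeasure n hp0 hp1
  have := bernEdges_isProbabilityMeasure n hs0 hs1
  exact Measure.isProbabilityMeasure_map (Measurable.of_discrete).aemeasurable

lemma QER_isProbabilityMeasure (n : ℕ) {p s : ℝ} (h0 : 0 ≤ p * s) (h1 : p * s ≤ 1) :
    IsProbabilityMeasure (QER n p s) := by
  have := bernEdges_isProbabilityMeasure n h0 h1
  unfold QER
  infer_instance

/-- The planted constraint, with the second graph pulled back to the labels of the first. -/
lemma planted_eq_iff {n : ℕ} (π : Equiv.Perm (Fin n)) (a b g u v : Edge n → Bool) :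
    ((fun e => g e && u e, fun f => g (edgeMap π⁻¹ f) && v (edgeMap π⁻¹ f)) :
      (Edge n → Bool) × (Edge n → Bool)) = (a, b) ↔
    ∀ e, a e = (g e && u e) ∧ b (edgePerm π e) = (g e && v e) := by
  have h1 : ∀ e, edgeMap π⁻¹ (edgePerm π e) = e := (edgePerm π).left_inv
  have h2 : ∀ e, edgePerm π (edgeMap π⁻¹ e) = e := (edgePerm π).right_inv
  simp only [Prod.mk.injEq, funext_iff]
  constructor
  · rintro ⟨ha, hb⟩ e
    refine ⟨(ha e).symm, ?_⟩
    rw [← hb, h1]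
  · intro h
    refine ⟨fun e => (h e).1.symm, fun f => ?_⟩
    have := (h (edgeMap π⁻¹ f)).2
    rw [h2] at this
    exact this.symm

lemma PER_real_singleton {n : ℕ} {p s : ℝ} (hp0 : 0 ≤ p) (hp1 : p ≤ 1) (hs0 : 0 ≤ s)
    (hs1 : s ≤ 1) (ab : (Edge n → Bool) × (Edge n → Bool)) :
    (PER n p s).real {ab} = plantMass p s ab := by
  classical
  have := bernEdges_isProbabilityMeasure n hp0 hp1
  have := bernEdges_isProbabilityMeasure n hs0 hs1
  obtain ⟨a, b⟩ := ab
  rw [PER, map_measureReal_apply Measurable.of_discrete (MeasurableSet.singleton _)]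
  set f : Equiv.Perm (Fin n) × (Edge n → Bool) × (Edge n → Bool) × (Edge n → Bool) →
    (Edge n → Bool) × (Edge n → Bool) := fun ω =>
      (fun e => ω.2.1 e && ω.2.2.1 e,
       fun f => ω.2.1 (edgeMap ω.1⁻¹ f) && ω.2.2.2 (edgeMap ω.1⁻¹ f)) with hf
  have hset : f ⁻¹' {(a, b)} = ((univ.filter fun ω => f ω = (a, b) : Finset _) : Set _) := by
    ext ω; simp
  have hmass : ∀ ω : Equiv.Perm (Fin n) × (Edge n → Bool) × (Edge n → Bool) × (Edge n → Bool),
      ((permUniform n).prod ((bernEdges n p).prod ((bernEdges n s).prod (bernEdges n s)))).real {ω}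
        = (n.factorial : ℝ)⁻¹ * ∏ e, (bernMass p (ω.2.1 e) * bernMass s (ω.2.2.1 e) *
          bernMass s (ω.2.2.2 e)) := by
    rintro ⟨π, g, u, v⟩
    rw [← Set.singleton_prod_singleton, ← Set.singleton_prod_singleton,
      ← Set.singleton_prod_singleton, measureReal_prod_prod, measureReal_prod_prod,
      measureReal_prod_prod, permUniform_real_singleton, bernEdges_real_singleton hp0 hp1,
      bernEdges_real_singleton hs0 hs1, bernEdges_real_singleton hs0 hs1, prod_mul_distrib,
      prod_mul_distrib, mul_assoc]
  rw [hset, ← sum_measureReal_singleton, sum_congr rfl fun ω _ => hmass ω, ← mul_sum, sum_filter,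
    plantMass]
  congr 1
  rw [Fintype.sum_prod_type]
  refine sum_congr rfl fun π _ => ?_
  simp only [pairMass]
  rw [← sum_triples_prod fun e x y z => bernMass p x * bernMass s y * bernMass s z *
    if a e = (x && y) ∧ b (edgePerm π e) = (x && z) then 1 else 0]
  simp only [Fintype.sum_prod_type]
  refine sum_congr rfl fun g _ => sum_congr rfl fun u _ => sum_congr rfl fun v _ => ?_
  simp only [hf, planted_eq_iff]
  simp only [mul_ite, mul_one, mul_zero]
  rw [Finset.prod_ite_zero]
  simp

lemma TV_nonneg {Ω : Type*} [MeasurableSpace Ω] (P Q : Measure Ω) : 0 ≤ TV P Q :=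
  Real.iSup_nonneg fun _ => abs_nonneg _

lemma TV_le {n : ℕ} {p s : ℝ} (hp0 : 0 < p) (hp1 : p < 1) (hs0 : 0 ≤ s) (hs1 : s ≤ 1 / 10)
    (hr : n * (p * s ^ 2) < 1)
    (hsmall : p * s ^ 2 * (2 / (1 - n * (p * s ^ 2)) ^ 3) ≤ 1 / 2) :
    TV (PER n p s) (QER n p s) ≤ 79 / 80 := by
  classical
  have hs1' : s ≤ 1 := by linarith
  have h0 : 0 ≤ p * s := by positivity
  have h1 : p * s ≤ 1 := by nlinarith
  have := QER_isProbabilityMeasure n h0 h1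
  have := PER_isProbabilityMeasure n hp0.le hp1.le hs0 hs1'
  refine Real.iSup_le (fun S => ?_) (by norm_num)
  have hS : S.1 = ((univ.filter (· ∈ S.1) : Finset _) : Set _) := by ext; simp
  have hP : (PER n p s S.1).toReal = ∑ ab with ab ∈ S.1, plantMass p s ab := by
    rw [← measureReal_def, hS, ← sum_measureReal_singleton]
    simp only [PER_real_singleton hp0.le hp1.le hs0 hs1', ← hS]
  have hQ : (QER n p s S.1).toReal = ∑ ab with ab ∈ S.1, nullMass p s ab := by
    rw [← measureReal_def, hS, ← sum_measureReal_singleton]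
    simp only [QER_real_singleton h0 h1, ← hS]
  rw [hP, hQ]
  exact abs_sub_le_of_second_moment _ _ (truncRatio p s) (nullMass_nonneg hp0 hp1 hs0 hs1')
    (truncRatio_nonneg hp0 hp1 hs1') (trunc_le_plantMass hp0 hp1 hs0 hs1') (plantMass_sum n p s)
    (nullMass_sum n p s) (half_le_trunc hp0 hp1 hs0 hs1' hr hsmall)
    (second_moment_le hp0 hp1 hs0 hs1) _

/-- The hypotheses of `TV_le` hold eventually: with `q = p s²` one has `n q ≤ 1 - δ`, so
`2 q / (1 - n q)³ ≤ 2 / (n δ³) = 2 / (n^{1/3} δ)³`. -/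
lemma eventually_small {p s δ : ℕ → ℝ} (hp : ∀ n, p n ∈ Set.Ioo (0 : ℝ) 1)
    (hδ : Tendsto (fun n : ℕ => (n : ℝ) ^ ((1 : ℝ) / 3) * δ n) atTop atTop)
    (hs : ∀ n, (s n) ^ 2 ≤ (1 - δ n) / ((n : ℝ) * p n)) :
    ∀ᶠ n : ℕ in atTop, n * (p n * s n ^ 2) < 1 ∧
      p n * s n ^ 2 * (2 / (1 - n * (p n * s n ^ 2)) ^ 3) ≤ 1 / 2 := by
  filter_upwards [hδ.eventually_ge_atTop 4, eventually_gt_atTop 0] with n h1 hn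
  have hn0 : (0 : ℝ) < n := by exact_mod_cast hn
  have hp0 := (hp n).1
  set c := (n : ℝ) ^ ((1 : ℝ) / 3) with hc
  have hc0 : 0 < c := by positivity
  have hc3 : c ^ 3 = n := by
    rw [hc, ← Real.rpow_natCast, ← Real.rpow_mul hn0.le]; norm_num
  have hδ0 : 0 < δ n := pos_of_mul_pos_right (by linarith) hc0.le
  have h2 := hs n
  rw [le_div_iff₀ (by positivity)] at h2
  set q := p n * s n ^ 2 with hq
  have hq0 : 0 ≤ q := by positivity
  have h3 : n * q ≤ 1 - δ n := by rw [hq]; linarith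
  refine ⟨by linarith, ?_⟩
  have h4 : δ n ^ 3 ≤ (1 - n * q) ^ 3 := by gcongr; linarith
  have h5 : (4 : ℝ) ^ 3 ≤ (c * δ n) ^ 3 := by gcongr
  rw [mul_pow, hc3] at h5
  have h6 : 0 < (1 - n * q) ^ 3 := lt_of_lt_of_le (by positivity) h4
  rw [mul_div_assoc', div_le_iff₀ h6]
  have h7 : n * (q * 2) ≤ n * (1 / 2 * (1 - n * q) ^ 3) := by
    have := mul_le_mul_of_nonneg_left h4 hn0.le
    linarith
  exact le_of_mul_le_mul_left h7 hn0

end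

/-- Theorem 2 of the paper, sparse converse, strong detection: in the correlated
Erdős–Rényi detection problem with sparse parent graph (`p_n ≤ n^{-α}` eventually for some fixed
`α > 0`), if `s_n² ≤ (1-δ_n)/(n p_n)` with `n^{1/3} δ_n → ∞` and `s_n² ≤ 0.01` for all `n`, then
`limsup TV(P_{n,p_n,s_n}, Q_{n,p_n,s_n}) < 1`, i.e. strong detection is impossible. -/
theorem stmt4 (p s : ℕ → ℝ) (hp : ∀ n, p n ∈ Set.Ioo (0 : ℝ) 1)
    (hs : ∀ n, s n ∈ Set.Icc (0 : ℝ) 1)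
    (hsparse : ∃ α : ℝ, 0 < α ∧ ∀ᶠ n : ℕ in atTop, p n ≤ (n : ℝ) ^ (-α))
    (hδ : ∃ δ : ℕ → ℝ, Tendsto (fun n : ℕ => (n : ℝ) ^ ((1 : ℝ) / 3) * δ n) atTop atTop ∧
      ∀ n, (s n) ^ 2 ≤ (1 - δ n) / ((n : ℝ) * p n) ∧ (s n) ^ 2 ≤ 0.01) :
    limsup (fun n => TV (PER n (p n) (s n)) (QER n (p n) (s n))) atTop < 1 := by
  obtain ⟨δ, hlim, hbound⟩ := hδ
  have hev : ∀ᶠ n : ℕ in atTop, TV (PER n (p n) (s n)) (QER n (p n) (s n)) ≤ 79 / 80 := by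
    filter_upwards [eventually_small hp hlim fun n => (hbound n).1] with n hn
    have hs10 : s n ≤ 1 / 10 := by
      refine le_of_sq_le_sq ?_ (by norm_num)
      have := (hbound n).2
      norm_num at this ⊢
      exact this
    exact TV_le (hp n).1 (hp n).2 (hs n).1 hs10 hn.1 hn.2
  refine lt_of_le_of_lt (limsup_le_of_le ?_ hev) (by norm_num)
  exact IsCoboundedUnder.of_frequently_ge (a := 0)
    (Frequently.of_forall fun n => TV_nonneg _ _)

end
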